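/- arXiv:1801.02162 — 2 statements merged into one kernel-verified Lean document; each statement's English description precedes it below -/
import Mathlib

section
/- For a fixed angle ω ∈ (0,π) and a circular arc sequence Ω* consisting of at least two arcs, there is at most one convex polygon P such that Ω* is the maximal ω-cloud of P. -/
open EuclideanGeometry Real Set
open scoped Classical

noncomputable section

abbrev Plane := EuclideanSpace ℝ (Fin 2)

/-- The unit vector in direction `θ`. -/
def unitVec (θ : ℝ) : Plane := (WithLp.equiv 2 (Fin 2 → ℝ)).symm ![Real.cos θ, Real.sin θ]

/-- The closed ray from `x` in direction `d`. -/
def ray (x d : Plane) : Set Plane := {y | ∃ t : ℝ, 0 ≤ t ∧ y = x + t • d}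

/-- The closed wedge with apex `x` bounded by the rays in directions `d₁` and `d₂`. -/
def wedgeSet (x d₁ d₂ : Plane) : Set Plane :=
  {y | ∃ s t : ℝ, 0 ≤ s ∧ 0 ≤ t ∧ y = x + s • d₁ + t • d₂}

/-- The wedge with apex `x`, arm directions `d₁`, `d₂` (unit vectors at angle `ω`),
is a minimal `ω`-wedge for `P`: it contains `P` and both arms touch `P`. -/
def IsMinWedge (P : Set Plane) (ω : ℝ) (x d₁ d₂ : Plane) : Prop :=
  ‖d₁‖ = 1 ∧ ‖d₂‖ = 1 ∧ InnerProductGeometry.angle d₁ d₂ = ω ∧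
  P ⊆ wedgeSet x d₁ d₂ ∧ (P ∩ ray x d₁).Nonempty ∧ (P ∩ ray x d₂).Nonempty

/-- The `ω`-cloud of `P`: the locus of apices of all minimal `ω`-wedges. -/
def omegaCloud (P : Set Plane) (ω : ℝ) : Set Plane := {x | ∃ d₁ d₂, IsMinWedge P ω x d₁ d₂}

/-- `V` is the vertex set of a convex polygon: at least 3 points, in strictly convex position. -/
def IsConvexPolygon (V : Finset Plane) : Prop :=
  3 ≤ V.card ∧ ∀ v ∈ V, v ∉ convexHull ℝ ((V.erase v : Finset Plane) : Set Plane)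

/-- The interior angle of a convex body `P` at a boundary point `v`, defined as the
supremum of angles `∠ a v b` over `a, b ∈ P \ {v}`. -/
def interiorAngle (P : Set Plane) (v : Plane) : ℝ :=
  sSup {θ : ℝ | ∃ a ∈ P, ∃ b ∈ P, a ≠ v ∧ b ≠ v ∧ θ = EuclideanGeometry.angle a v b}

/-- A circular arc, given by center, radius, starting angle and angular extent. -/
structure CircArc where
  center : Plane
  radius : ℝ
  start : ℝ
  delta : ℝ

/-- The (closed) point set of a circular arc. -/
def CircArc.points (A : CircArc) : Set Plane :=
  {p | ∃ θ ∈ Set.Icc A.start (A.start + A.delta), p = A.center + A.radius • unitVec θ}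

/-- The relative interior of a circular arc. -/
def CircArc.intPoints (A : CircArc) : Set Plane :=
  {p | ∃ θ ∈ Set.Ioo A.start (A.start + A.delta), p = A.center + A.radius • unitVec θ}

/-- The start point of an arc when it is traversed clockwise. -/
def CircArc.cwStart (A : CircArc) : Plane := A.center + A.radius • unitVec (A.start + A.delta)

/-- The end point of an arc when it is traversed clockwise. -/
def CircArc.cwEnd (A : CircArc) : Plane := A.center + A.radius • unitVec A.start

/-- The set of (bisector) directions of minimal `ω`-wedges of `P` with apex `x`. -/
def wedgeDirs (P : Set Plane) (ω : ℝ) (x : Plane) : Set Plane :=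
  {d | ∃ d₁ d₂, IsMinWedge P ω x d₁ d₂ ∧ d = (‖d₁ + d₂‖)⁻¹ • (d₁ + d₂)}

/-- On every interior point of the arc `A`, the minimal `ω`-wedge of `P` touches `P`
at `p` (with one arm) and `q` (with the other arm). -/
def ContactPair (P : Set Plane) (ω : ℝ) (A : CircArc) (p q : Plane) : Prop :=
  ∀ x ∈ A.intPoints, ∃ d₁ d₂, IsMinWedge P ω x d₁ d₂ ∧ p ∈ ray x d₁ ∧ q ∈ ray x d₂

namespace Cl

def dot (v : ℂ) (θ : ℝ) : ℝ := v.re * Real.cos θ + v.im * Real.sin θ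
def dt (v : ℂ) (θ : ℝ) : ℝ := -v.re * Real.sin θ + v.im * Real.cos θ
def uu (θ : ℝ) : ℂ := Complex.exp (θ * Complex.I)

lemma uu_eq (θ : ℝ) : uu θ = ⟨Real.cos θ, Real.sin θ⟩ := by
  apply Complex.ext
  · simp [uu, Complex.exp_ofReal_mul_I_re]
  · simp [uu, Complex.exp_ofReal_mul_I_im]
lemma uu_re (θ : ℝ) : (uu θ).re = Real.cos θ := by rw [uu_eq]
lemma uu_im (θ : ℝ) : (uu θ).im = Real.sin θ := by rw [uu_eq]
lemma uu_add (a b : ℝ) : uu (a + b) = uu a * uu b := by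
  simp [uu, add_mul, Complex.exp_add]
lemma uu_ne (a : ℝ) : uu a ≠ 0 := Complex.exp_ne_zero _
lemma uu_zero : uu 0 = 1 := by simp [uu]
lemma uu_norm (a : ℝ) : ‖uu a‖ = 1 := Complex.norm_exp_ofReal_mul_I a
lemma uu_neg (a : ℝ) : uu (-a) * uu a = 1 := by rw [← uu_add]; simp [uu_zero]
lemma uu_cont : Continuous uu := by unfold uu; fun_prop
lemma uu_congr {a b : ℝ} (h : uu a = uu b) : Real.cos a = Real.cos b ∧ Real.sin a = Real.sin b :=
  ⟨by rw [← uu_re, h, uu_re], by rw [← uu_im, h, uu_im]⟩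
lemma uu_inj {a b : ℝ} (h : uu a = uu b) (h1 : |a - b| < 2 * π) : a = b := by
  have h2 : Real.cos (a - b) = 1 := by
    obtain ⟨h3, h4⟩ := uu_congr h
    rw [Real.cos_sub, h3, h4]; nlinarith [Real.sin_sq_add_cos_sq b]
  have := (Real.cos_eq_one_iff_of_lt_of_lt (abs_lt.1 h1).1 (abs_lt.1 h1).2).1 h2
  linarith

lemma dot_add (v : ℂ) (θ t : ℝ) :
    dot v (θ + t) = dot v θ * Real.cos t + dt v θ * Real.sin t := by
  simp only [dot, dt, Real.cos_add, Real.sin_add]; ring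
lemma dt_add (v : ℂ) (θ t : ℝ) :
    dt v (θ + t) = dt v θ * Real.cos t - dot v θ * Real.sin t := by
  simp only [dot, dt, Real.cos_add, Real.sin_add]; ring
lemma rep (v : ℂ) (θ : ℝ) : v = (dot v θ + dt v θ * Complex.I) * uu θ := by
  have := Real.sin_sq_add_cos_sq θ
  rw [uu_eq]
  unfold dot dt
  generalize Real.cos θ = c at *
  generalize Real.sin θ = s at *
  apply Complex.ext
  · simp; linear_combination (-v.re) * this
  · simp; linear_combination (-v.im) * this
lemma ext' {v w : ℂ} {θ : ℝ} (h : dot v θ = dot w θ) (h2 : dt v θ = dt w θ) : v = w := by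
  rw [rep v θ, rep w θ, h, h2]
lemma dot_sub (v w : ℂ) (θ : ℝ) : dot (v - w) θ = dot v θ - dot w θ := by simp [dot]; ring
lemma dot_addv (v w : ℂ) (θ : ℝ) : dot (v + w) θ = dot v θ + dot w θ := by simp [dot]; ring
lemma dt_sub (v w : ℂ) (θ : ℝ) : dt (v - w) θ = dt v θ - dt w θ := by simp [dt]; ring
lemma dot_mk (a b θ : ℝ) : dot ((a + b * Complex.I) * uu θ) θ = a := by
  have := Real.sin_sq_add_cos_sq θ
  rw [uu_eq]; simp [dot]; linear_combination a * this
lemma dt_mk (a b θ : ℝ) : dt ((a + b * Complex.I) * uu θ) θ = b := by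
  have := Real.sin_sq_add_cos_sq θ
  rw [uu_eq]; simp [dt]; linear_combination b * this

def IsTop (V : Finset ℂ) (θ : ℝ) (v : ℂ) : Prop :=
  v ∈ V ∧ ∀ w ∈ V, dot w θ < dot v θ ∨ (dot w θ = dot v θ ∧ dt w θ ≤ dt v θ)

lemma exists_top {V : Finset ℂ} (hV : V.Nonempty) (θ : ℝ) : ∃ v, IsTop V θ v := by
  obtain ⟨v, hv, h⟩ := V.exists_max_image (fun w => toLex (dot w θ, dt w θ)) hV
  refine ⟨v, hv, fun w hw => ?_⟩
  have := h w hw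
  rw [Prod.Lex.le_iff] at this
  simpa using this

def pp (V : Finset ℂ) (θ : ℝ) : ℂ := if h : ∃ v, IsTop V θ v then h.choose else 0
def hh (V : Finset ℂ) (θ : ℝ) : ℝ := dot (pp V θ) θ

lemma pp_top {V : Finset ℂ} (hV : V.Nonempty) (θ : ℝ) : IsTop V θ (pp V θ) := by
  have h := exists_top hV θ
  rw [pp, dif_pos h]; exact h.choose_spec
lemma pp_mem {V : Finset ℂ} (hV : V.Nonempty) (θ : ℝ) : pp V θ ∈ V := (pp_top hV θ).1
lemma le_hh {V : Finset ℂ} {v : ℂ} (hv : v ∈ V) (θ : ℝ) : dot v θ ≤ hh V θ := by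
  rcases (pp_top ⟨v, hv⟩ θ).2 v hv with h | h
  · exact h.le
  · exact h.1.le
lemma pp_dt {V : Finset ℂ} {v : ℂ} (hv : v ∈ V) {θ : ℝ} (h : dot v θ = hh V θ) :
    dt v θ ≤ dt (pp V θ) θ := by
  rcases (pp_top ⟨v, hv⟩ θ).2 v hv with h' | h'
  · rw [h] at h'; exact absurd h' (lt_irrefl _)
  · exact h'.2
lemma pp_congr (V : Finset ℂ) {a b : ℝ} (h : uu a = uu b) : pp V a = pp V b := by
  obtain ⟨h1, h2⟩ := uu_congr h
  have : IsTop V a = IsTop V b := by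
    funext v; simp only [IsTop, dot, dt, h1, h2]
  unfold pp; rw [this]
lemma dot_congr (v : ℂ) {a b : ℝ} (h : uu a = uu b) : dot v a = dot v b := by
  obtain ⟨h1, h2⟩ := uu_congr h
  simp [dot, h1, h2]
lemma hh_congr (V : Finset ℂ) {a b : ℝ} (h : uu a = uu b) : hh V a = hh V b := by
  unfold hh; rw [pp_congr V h, dot_congr _ h]
lemma uu_shift {a b : ℝ} (h : uu a = uu b) (t : ℝ) : uu (a + t) = uu (b + t) := by
  rw [uu_add, uu_add, h]

lemma hh_cont {V : Finset ℂ} (hV : V.Nonempty) : Continuous (hh V) := by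
  have : hh V = fun θ => V.sup' hV (fun v => dot v θ) := by
    funext θ
    apply le_antisymm
    · exact Finset.le_sup' (fun v => dot v θ) (pp_mem hV θ)
    · exact Finset.sup'_le _ _ fun v hv => le_hh hv θ
  rw [this]
  refine Continuous.finset_sup'_apply hV fun v _ => ?_
  unfold dot; fun_prop

lemma btw1 {V : Finset ℂ} {v : ℂ} (hv : v ∈ V) {s τ : ℝ} (h1 : dot v s = hh V s)
    (h2 : dot v (s + τ) = hh V (s + τ)) (h0 : 0 < τ) (hπ : τ < π) : pp V s = v := by
  have hs := Real.sin_pos_of_pos_of_lt_pi h0 hπ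
  have h3 := pp_dt hv h1
  have h4 := le_hh (pp_mem ⟨v, hv⟩ s) (s + τ)
  rw [← h2, dot_add, dot_add, h1] at h4
  have h5 : dt (pp V s) s ≤ dt v s := by
    have : dt (pp V s) s * Real.sin τ ≤ dt v s * Real.sin τ := by
      simp only [hh] at h4; linarith
    exact le_of_mul_le_mul_right this hs
  exact ext' (θ := s) (by rw [h1]; rfl) (le_antisymm h5 h3)

lemma btw2 {V : Finset ℂ} {v : ℂ} (hv : v ∈ V) {s τ r : ℝ} (h1 : dot v s = hh V s)
    (h2 : dot v (s + τ) = hh V (s + τ)) (h0 : 0 < τ) (hπ : τ < π) (hr : 0 ≤ r) (hr2 : r ≤ τ) :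
    dot v (s + r) = hh V (s + r) := by
  have hs := Real.sin_pos_of_pos_of_lt_pi h0 hπ
  have hs1 := Real.sin_nonneg_of_nonneg_of_le_pi hr (by linarith)
  have hs2 := Real.sin_nonneg_of_nonneg_of_le_pi (x := τ - r) (by linarith) (by linarith)
  apply le_antisymm (le_hh hv _)
  have key : ∀ w, Real.sin τ * dot w (s + r) =
      Real.sin (τ - r) * dot w s + Real.sin r * dot w (s + τ) := by
    intro w
    rw [dot_add, dot_add, Real.sin_sub]; ring
  have hm := pp_mem ⟨v, hv⟩ (s + r)
  have e1 := le_hh hm s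
  have e2 := le_hh hm (s + τ)
  have k1 := key v
  have k2 := key (pp V (s + r))
  rw [h1, h2] at k1
  have : Real.sin τ * hh V (s + r) ≤ Real.sin τ * dot v (s + r) := by
    unfold hh at *
    rw [k1, k2]
    gcongr
  exact le_of_mul_le_mul_left this hs

lemma rt {V : Finset ℂ} (hV : V.Nonempty) (θ : ℝ) :
    ∃ τ > 0, ∀ t, 0 ≤ t → t ≤ τ → dot (pp V θ) (θ + t) = hh V (θ + t) := by
  have hc : ∀ v : ℂ, Continuous fun t => dot v (θ + t) := fun v => by unfold dot; fun_prop
  have : ∀ v ∈ V, ∀ᶠ t in nhdsWithin (0 : ℝ) (Set.Ici 0),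
      dot v (θ + t) ≤ dot (pp V θ) (θ + t) := by
    intro v hv
    rcases (pp_top hV θ).2 v hv with h | ⟨h1, h2⟩
    · have : ∀ᶠ t in nhds (0 : ℝ), dot v (θ + t) < dot (pp V θ) (θ + t) := by
        apply (hc v).continuousAt.eventually_lt (hc _).continuousAt
        simpa using h
      exact (this.filter_mono nhdsWithin_le_nhds).mono fun _ h => h.le
    · have h3 : ∀ᶠ t in nhds (0 : ℝ), t < π := Iio_mem_nhds Real.pi_pos
      filter_upwards [self_mem_nhdsWithin, h3.filter_mono nhdsWithin_le_nhds] with t ht ht2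
      rw [dot_add, dot_add, h1]
      have := Real.sin_nonneg_of_nonneg_of_le_pi (show (0:ℝ) ≤ t from ht) ht2.le
      gcongr
  have h2 := (V.eventually_all).2 this
  rw [Filter.Eventually, mem_nhdsGE_iff_exists_Icc_subset] at h2
  obtain ⟨τ, h0, hs⟩ := h2
  refine ⟨τ, h0, fun t ht1 ht2 => le_antisymm (le_hh (pp_mem hV _) _) ?_⟩
  exact hs ⟨ht1, ht2⟩ _ (pp_mem hV _)

/-- apex -/
def G (V : Finset ℂ) (α θ : ℝ) : ℂ :=
  (hh V θ + ((hh V (θ + α) - hh V θ * Real.cos α) / Real.sin α : ℝ) * Complex.I) * uu θ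

lemma G_cont {V : Finset ℂ} (hV : V.Nonempty) (α : ℝ) : Continuous (G V α) := by
  have := hh_cont hV
  have := uu_cont
  unfold G; fun_prop
lemma G_congr (V : Finset ℂ) (α : ℝ) {a b : ℝ} (h : uu a = uu b) : G V α a = G V α b := by
  unfold G; rw [hh_congr V h, hh_congr V (uu_shift h α), h]

lemma G_dot (V : Finset ℂ) (α θ : ℝ) : dot (G V α θ) θ = hh V θ := dot_mk _ _ _
lemma G_dot2 (V : Finset ℂ) {α : ℝ} (hα : 0 < Real.sin α) (θ : ℝ) :
    dot (G V α θ) (θ + α) = hh V (θ + α) := by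
  rw [dot_add, G_dot]
  unfold G; rw [dt_mk]; field_simp; ring

lemma ext2 {α : ℝ} (hα : 0 < Real.sin α) {x y : ℂ} {θ : ℝ} (h1 : dot x θ = dot y θ)
    (h2 : dot x (θ + α) = dot y (θ + α)) : x = y := by
  apply ext' h1
  rw [dot_add, dot_add, h1] at h2
  have := add_left_cancel h2
  exact mul_right_cancel₀ hα.ne' this

def cen (α : ℝ) (p q : ℂ) : ℂ :=
  Complex.I * (uu (-α) * q - uu α * p) / (2 * Real.sin α)
def rho (α : ℝ) (p q : ℂ) : ℂ :=
  Complex.I * uu α * (starRingEnd ℂ q - starRingEnd ℂ p) / (2 * Real.sin α)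

def kap (α : ℝ) (p q : ℂ) (θ : ℝ) : ℂ := cen α p q + rho α p q * uu (2 * θ)

lemma dot_cast (v : ℂ) (θ : ℝ) :
    (dot v θ : ℂ) = (v * uu (-θ) + starRingEnd ℂ v * uu θ) / 2 := by
  rw [uu_eq, uu_eq]
  unfold dot
  rw [Real.cos_neg, Real.sin_neg]
  generalize Real.cos θ = c at *
  generalize Real.sin θ = s at *
  apply Complex.ext
  · simp
  · simp; ring
lemma sin_cast (θ : ℝ) : 2 * (Real.sin θ : ℂ) = -Complex.I * (uu θ - uu (-θ)) := by
  rw [uu_eq, uu_eq, Real.cos_neg, Real.sin_neg]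
  generalize Real.cos θ = c at *
  generalize Real.sin θ = s at *
  apply Complex.ext
  · simp; ring
  · simp
lemma cos_cast (θ : ℝ) : (Real.cos θ : ℂ) = (uu θ + uu (-θ)) / 2 := by
  rw [uu_eq, uu_eq, Real.cos_neg, Real.sin_neg]
  generalize Real.cos θ = c at *
  generalize Real.sin θ = s at *
  apply Complex.ext
  · simp
  · simp

lemma kap_eq {α : ℝ} (hα : 0 < Real.sin α) (p q : ℂ) (θ : ℝ) :
    kap α p q θ =
      (dot p θ + ((dot q (θ + α) - dot p θ * Real.cos α) / Real.sin α : ℝ) * Complex.I) * uu θ := by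
  have hne : (Real.sin α : ℂ) ≠ 0 := by exact_mod_cast hα.ne'
  have hu : uu θ * uu (-θ) = 1 := by rw [mul_comm]; exact uu_neg θ
  rw [dot_cast, Complex.ofReal_div, Complex.ofReal_sub, Complex.ofReal_mul, dot_cast, dot_cast]
  have h2 : uu (2 * θ) = uu θ * uu θ := by rw [← uu_add]; congr 1; ring
  have h3 : uu (-(θ + α)) = uu (-θ) * uu (-α) := by rw [← uu_add]; congr 1; ring
  unfold kap cen rho
  rw [h2, h3, uu_add]
  have hs := sin_cast α
  have hc := cos_cast α
  generalize (Real.sin α : ℂ) = S at *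
  field_simp
  rw [hc]
  linear_combination (-Complex.I * uu (-α) * q + Complex.I * uu α * p) * hu - (p * uu (-θ) + starRingEnd ℂ p * uu θ) * uu θ * hs / 2

end Cl

namespace Cl

def cc (V : Finset ℂ) (α θ : ℝ) : ℂ := cen α (pp V θ) (pp V (θ + α))
def rr (V : Finset ℂ) (α θ : ℝ) : ℂ := rho α (pp V θ) (pp V (θ + α))
def ND (V : Finset ℂ) (α θ : ℝ) : Prop := pp V θ ≠ pp V (θ + α)

lemma cc_congr (V : Finset ℂ) (α : ℝ) {a b : ℝ} (h : uu a = uu b) : cc V α a = cc V α b := by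
  unfold cc; rw [pp_congr V h, pp_congr V (uu_shift h α)]
lemma ND_congr (V : Finset ℂ) (α : ℝ) {a b : ℝ} (h : uu a = uu b) : ND V α a ↔ ND V α b := by
  unfold ND; rw [pp_congr V h, pp_congr V (uu_shift h α)]

lemma G_kap {V : Finset ℂ} {α : ℝ} (hα : 0 < Real.sin α) {p q : ℂ} {θ : ℝ}
    (h1 : dot p θ = hh V θ) (h2 : dot q (θ + α) = hh V (θ + α)) :
    G V α θ = kap α p q θ := by
  rw [kap_eq hα, h1, h2]; rfl

lemma G_eq (V : Finset ℂ) {α : ℝ} (hα : 0 < Real.sin α) (θ : ℝ) :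
    G V α θ = cc V α θ + rr V α θ * uu (2 * θ) := G_kap hα rfl rfl

lemma G_rt {V : Finset ℂ} (hV : V.Nonempty) {α : ℝ} (hα : 0 < Real.sin α) (θ : ℝ) :
    ∃ τ > 0, ∀ t, 0 ≤ t → t ≤ τ → G V α (θ + t) = cc V α θ + rr V α θ * uu (2 * (θ + t)) := by
  obtain ⟨a, ha, h1⟩ := rt hV θ
  obtain ⟨b, hb, h2⟩ := rt hV (θ + α)
  refine ⟨min a b, lt_min ha hb, fun t ht0 ht => ?_⟩
  refine G_kap hα (h1 t ht0 (ht.trans (min_le_left _ _))) ?_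
  rw [add_right_comm]
  exact h2 t ht0 (ht.trans (min_le_right _ _))

lemma lf {V : Finset ℂ} (hV : V.Nonempty) (θ : ℝ) :
    ∃ v, ∃ τ > 0, ∀ t, 0 ≤ t → t ≤ τ → dot v (θ - t) = hh V (θ - t) := by
  have hW : (V.image (starRingEnd ℂ)).Nonempty := hV.image _
  have hd : ∀ v θ, dot (starRingEnd ℂ v) (-θ) = dot v θ := by intro v θ; simp [dot]
  have hs : ∀ θ, hh (V.image (starRingEnd ℂ)) (-θ) = hh V θ := by
    intro θ
    apply le_antisymm
    · have := pp_mem hW (-θ)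
      rw [Finset.mem_image] at this
      obtain ⟨v, hv, e⟩ := this
      unfold hh; rw [← e, hd]; exact le_hh hv θ
    · conv_lhs => unfold hh
      rw [← hd]; exact le_hh (Finset.mem_image_of_mem _ (pp_mem hV θ)) _
  obtain ⟨τ, h0, h⟩ := rt hW (-θ)
  refine ⟨starRingEnd ℂ (pp (V.image (starRingEnd ℂ)) (-θ)), τ, h0, fun t h1 h2 => ?_⟩
  have := h t h1 h2
  rw [← hd, Complex.conj_conj, ← hs]
  rw [show -(θ - t) = -θ + t by ring]; exact this

lemma G_lf {V : Finset ℂ} (hV : V.Nonempty) {α : ℝ} (hα : 0 < Real.sin α) (θ : ℝ) :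
    ∃ c r, ∃ τ > 0, ∀ t, 0 ≤ t → t ≤ τ → G V α (θ - t) = c + r * uu (2 * (θ - t)) := by
  obtain ⟨p, a, ha, h1⟩ := lf hV θ
  obtain ⟨q, b, hb, h2⟩ := lf hV (θ + α)
  refine ⟨cen α p q, rho α p q, min a b, lt_min ha hb, fun t ht0 ht => ?_⟩
  refine G_kap hα (h1 t ht0 (ht.trans (min_le_left _ _))) ?_
  rw [show θ - t + α = θ + α - t by ring]
  exact h2 t ht0 (ht.trans (min_le_right _ _))

lemma rho_ne {α : ℝ} (hα : 0 < Real.sin α) {p q : ℂ} : rho α p q ≠ 0 ↔ p ≠ q := by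
  have hne : (Real.sin α : ℂ) ≠ 0 := by exact_mod_cast hα.ne'
  unfold rho
  rw [ne_eq, div_eq_zero_iff, mul_eq_zero, mul_eq_zero, sub_eq_zero]
  constructor
  · intro h e; exact h (by simp [e])
  · intro h e
    rcases e with ((e | e) | e) | e
    · exact Complex.I_ne_zero e
    · exact uu_ne _ e
    · exact h ((starRingEnd ℂ).injective e.symm)
    · exact hne (by simpa using e)

lemma uu_two (t : ℝ) : uu (2 * t) - 1 = 2 * Complex.I * Real.sin t * uu t := by
  have h := uu_neg t
  have h2 : uu (2 * t) = uu t * uu t := by rw [← uu_add]; congr 1; ring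
  rw [h2]
  linear_combination (-Complex.I * uu t) * sin_cast t + h + (uu t - uu (-t)) * uu t * Complex.I_sq

lemma core {A B : ℂ} (hA : A ≠ 0) {t s : ℕ → ℝ} {Q : ℕ → Prop} (ht : ∀ n, 0 < t n)
    (lt : Filter.Tendsto t Filter.atTop (nhds 0)) (ls : Filter.Tendsto s Filter.atTop (nhds 0))
    (hf : ∃ᶠ n in Filter.atTop, A * (uu (2 * t n) - 1) = B * (uu (2 * s n) - 1) ∧ Q n) :
    A = B ∧ ∃ n, s n = t n ∧ Q n := by
  have key : ∀ᶠ n in Filter.atTop, t n < 1 :=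
    lt.eventually (Iio_mem_nhds (by norm_num))
  have lst : Filter.Tendsto (fun n => s n - t n) Filter.atTop (nhds 0) := by
    simpa using ls.sub lt
  have key2 : ∀ᶠ n in Filter.atTop, |s n - t n| < 1 := by
    have h0 : |(0 : ℝ)| < 1 := by simp
    exact lst.abs.eventually (Iio_mem_nhds h0)
  have hf2 : ∃ᶠ n in Filter.atTop, ((Real.sin (t n) : ℂ) =
      (B / A * uu (s n - t n)) * Real.sin (s n) ∧ Real.sin (t n) ≠ 0 ∧ |s n - t n| < 1 ∧ Q n) := by
    refine (hf.and_eventually (key.and key2)).mono ?_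
    rintro n ⟨⟨h1, hq⟩, h2, h3⟩
    refine ⟨?_, ?_, h3, hq⟩
    · rw [uu_two, uu_two] at h1
      have e : uu (s n) = uu (s n - t n) * uu (t n) := by rw [← uu_add]; congr 1; ring
      rw [e] at h1
      have h4 : (2 * Complex.I * uu (t n)) ≠ 0 := by simp [uu_ne]
      apply mul_left_cancel₀ h4
      apply mul_left_cancel₀ hA
      have hBA : A * (B / A) = B := mul_div_cancel₀ B hA
      linear_combination h1 - (2 * Complex.I * uu (t n) * uu (s n - t n) * Real.sin (s n)) * hBA
    · exact (Real.sin_pos_of_pos_of_lt_pi (ht n) (by linarith [Real.pi_gt_three])).ne'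
  have him : (B / A).im = 0 := by
    have hcl : IsClosed {z : ℂ | z.im = 0} := isClosed_eq Complex.continuous_im continuous_const
    have hl : Filter.Tendsto (fun n => B / A * uu (s n - t n)) Filter.atTop (nhds (B / A)) := by
      have := (uu_cont.tendsto 0).comp lst
      rw [uu_zero] at this
      simpa using this.const_mul (B / A)
    refine hcl.mem_of_frequently_of_tendsto (hf2.mono ?_) hl
    rintro n ⟨h1, h2, -⟩
    have h3 := congrArg Complex.im h1
    rw [Complex.im_mul_ofReal, Complex.ofReal_im] at h3
    rcases mul_eq_zero.1 h3.symm with h4 | h4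
    · exact h4
    · exfalso; rw [h4] at h1; simp at h1; exact h2 (by exact_mod_cast h1)
  have hw : B / A = ((B / A).re : ℂ) := by apply Complex.ext <;> simp [him]
  generalize (B / A).re = w at hw
  obtain ⟨n, h1, h2, h3, h4⟩ := hf2.exists
  rw [hw] at h1
  have e1 := congrArg Complex.im h1
  have e2 := congrArg Complex.re h1
  rw [Complex.im_mul_ofReal, Complex.im_ofReal_mul, Complex.ofReal_im, uu_im] at e1
  rw [Complex.re_mul_ofReal, Complex.re_ofReal_mul, Complex.ofReal_re, uu_re] at e2
  have e3 : Real.sin (s n - t n) = 0 := by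
    rcases mul_eq_zero.1 e1.symm with h | h
    · rcases mul_eq_zero.1 h with h | h
      · rw [h] at e2; simp at e2; exact absurd e2 h2
      · exact h
    · rw [h] at e2; simp at e2; exact absurd e2 h2
  have e4 : s n - t n = 0 := by
    rw [abs_lt] at h3
    exact (Real.sin_eq_zero_iff_of_lt_of_lt (by linarith [Real.pi_gt_three]) (by linarith [Real.pi_gt_three])).1 e3
  have e5 : s n = t n := by linarith
  refine ⟨?_, n, e5, h4⟩
  rw [e5] at e2; simp at e2
  have : w = 1 := by
    apply mul_right_cancel₀ h2; linarith
  rw [this] at hw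
  rw [div_eq_iff hA] at hw
  simpa using hw.symm

lemma exists_rep (s : ℝ) : ∃ s' ∈ Set.Icc 0 (2 * π), uu s' = uu s := by
  refine ⟨toIcoMod Real.two_pi_pos 0 s, ?_, ?_⟩
  · have := toIcoMod_mem_Ico Real.two_pi_pos 0 s
    simp only [zero_add] at this
    exact ⟨this.1, this.2.le⟩
  · rw [← self_sub_toIcoDiv_zsmul]
    generalize toIcoDiv Real.two_pi_pos 0 s = k
    rw [uu_eq, uu_eq]
    congr 1
    · simp [Real.cos_sub_int_mul_two_pi]
    · simp [Real.sin_sub_int_mul_two_pi]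

lemma germ {V V' : Finset ℂ} (hV : V.Nonempty) (hV' : V'.Nonempty) {α : ℝ} (hα : 0 < Real.sin α)
    (hr : Set.range (G V α) ⊆ Set.range (G V' α)) {θ : ℝ} (hnd : ND V α θ) :
    ∃ θ', G V' α θ' = G V α θ ∧ cc V' α θ' = cc V α θ ∧ ND V' α θ' := by
  have hA : rr V α θ * uu (2 * θ) ≠ 0 := mul_ne_zero ((rho_ne hα).2 hnd) (uu_ne _)
  obtain ⟨τ, hτ, hG⟩ := G_rt hV hα θ
  have : ∀ t : ℝ, ∃ s ∈ Set.Icc 0 (2 * π), G V' α s = G V α (θ + t) := by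
    intro t
    obtain ⟨s, hs⟩ := hr ⟨θ + t, rfl⟩
    obtain ⟨s', h1, h2⟩ := exists_rep s
    exact ⟨s', h1, by rw [G_congr V' α h2, hs]⟩
  choose s hs1 hs2 using this
  let t0 : ℕ → ℝ := fun n => 1 / (n + 1 : ℝ)
  have ht0 : Filter.Tendsto t0 Filter.atTop (nhds 0) := tendsto_one_div_add_atTop_nhds_zero_nat
  have ht0p : ∀ n, 0 < t0 n := fun n => by positivity
  obtain ⟨a, ha, φ, hφ, hlim⟩ := isCompact_Icc.tendsto_subseq (fun n => hs1 (t0 n))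
  have lt : Filter.Tendsto (fun n => t0 (φ n)) Filter.atTop (nhds 0) := ht0.comp hφ.tendsto_atTop
  have hlim' : Filter.Tendsto (fun n => s (t0 (φ n))) Filter.atTop (nhds a) := hlim
  have ls : Filter.Tendsto (fun n => s (t0 (φ n)) - a) Filter.atTop (nhds 0) := by
    simpa using hlim'.sub_const a
  have hGa : G V' α a = G V α θ := by
    have h1 := ((G_cont hV' α).tendsto a).comp hlim'
    have h2 : Filter.Tendsto (fun n => G V α (θ + t0 (φ n))) Filter.atTop (nhds (G V α θ)) := by
      have := ((G_cont hV α).tendsto (θ + 0)).comp (lt.const_add θ)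
      simpa [Function.comp_def] using this
    refine tendsto_nhds_unique (h1.congr fun n => ?_) h2
    exact hs2 _
  have G0 := G_eq V hα θ
  have evt : ∀ᶠ n in Filter.atTop, t0 (φ n) < τ := lt.eventually (Iio_mem_nhds hτ)
  have e2 : ∀ x y : ℝ, uu (2 * (x + y)) = uu (2 * x) * uu (2 * y) := fun x y => by
    rw [← uu_add]; congr 1; ring
  by_cases hc : ∃ᶠ n in Filter.atTop, a ≤ s (t0 (φ n))
  · obtain ⟨τ', hτ', hG'⟩ := G_rt hV' hα a
    have G0' := G_eq V' hα a
    have evs : ∀ᶠ n in Filter.atTop, s (t0 (φ n)) - a < τ' := ls.eventually (Iio_mem_nhds hτ')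
    have := core (B := rr V' α a * uu (2 * a)) (Q := fun _ => True) hA (fun n => ht0p (φ n)) lt ls ?_
    · have hcc : cc V' α a = cc V α θ := by
        rw [G0, G0', ← this.1] at hGa; exact add_right_cancel hGa
      refine ⟨a, hGa, hcc, (rho_ne hα).1 ?_⟩
      intro h0
      rw [this.1] at hA
      apply hA; unfold rr; rw [h0, zero_mul]
    · refine (hc.and_eventually (evt.and evs)).mono ?_
      rintro n ⟨h1, h2, h3⟩
      refine ⟨?_, trivial⟩
      have g1 := hG _ (ht0p (φ n)).le h2.le
      have g2 := hG' (s (t0 (φ n)) - a) (by linarith) h3.le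
      rw [e2] at g1 g2
      rw [add_sub_cancel, hs2, g1] at g2
      rw [G0, G0'] at hGa
      linear_combination g2 + hGa
  · exfalso
    rw [Filter.not_frequently] at hc
    obtain ⟨c', r', τ', hτ', hG'⟩ := G_lf hV' hα a
    have G0' := hG' 0 le_rfl hτ'.le
    rw [sub_zero] at G0'
    have evs : ∀ᶠ n in Filter.atTop, -τ' < s (t0 (φ n)) - a := ls.eventually (Ioi_mem_nhds (by linarith))
    obtain ⟨-, n, h1, h2⟩ := core (B := r' * uu (2 * a)) (Q := fun n => ¬ a ≤ s (t0 (φ n))) hA (fun n => ht0p (φ n)) lt ls (by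
      refine ((hc.and (evt.and evs)).mono ?_).frequently
      rintro n ⟨h1, h2, h3⟩
      refine ⟨?_, h1⟩
      have g1 := hG _ (ht0p (φ n)).le h2.le
      have g2 := hG' (a - s (t0 (φ n))) (by linarith) (by linarith)
      rw [show a - (a - s (t0 (φ n))) = a + (s (t0 (φ n)) - a) by ring] at g2
      rw [e2] at g1 g2
      rw [add_sub_cancel, hs2, g1] at g2
      rw [G0, G0'] at hGa
      linear_combination g2 + hGa)
    have := ht0p (φ n)
    exact h2 (by linarith)

end Cl

namespace Cl

def Good (V : Finset ℂ) : Prop := ∀ θ, ∃ v ∈ V, ∃ w ∈ V, dot v θ ≠ dot w θ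

lemma Good.ne {V : Finset ℂ} (h : Good V) : V.Nonempty := by
  obtain ⟨v, hv, -⟩ := h 0; exact ⟨v, hv⟩

lemma dot_I (b φ ψ : ℝ) : dot (b * Complex.I * uu φ) ψ = b * Real.sin (ψ - φ) := by
  rw [uu_eq, Real.sin_sub]
  unfold dot
  generalize Real.cos φ = c at *
  generalize Real.sin φ = s at *
  simp; ring

lemma perp {x y : ℂ} {θ : ℝ} (h : dot x θ = dot y θ) :
    x = y + (dt x θ - dt y θ : ℝ) * Complex.I * uu θ := by
  have h1 := rep x θ
  have h2 := rep y θ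
  rw [h] at h1
  push_cast
  linear_combination h1 - h2

lemma pa {V : Finset ℂ} (hV : V.Nonempty) {α : ℝ} (hα : 0 < Real.sin α) (θ : ℝ) :
    ∃ a : ℝ, 0 ≤ a ∧ pp V θ = G V α θ - a * Complex.I * uu θ := by
  have h := perp (x := pp V θ) (y := G V α θ) (θ := θ) (by rw [G_dot]; rfl)
  refine ⟨-(dt (pp V θ) θ - dt (G V α θ) θ), ?_, ?_⟩
  · have h1 := le_hh (pp_mem hV θ) (θ + α)
    rw [← G_dot2 V hα, h, dot_addv, dot_I, add_sub_cancel_left] at h1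
    have : (dt (pp V θ) θ - dt (G V α θ) θ) * Real.sin α ≤ 0 := by linarith
    have := nonpos_of_mul_nonpos_left this hα
    linarith
  · rw [Complex.ofReal_neg]; linear_combination h

lemma qb {V : Finset ℂ} (hV : V.Nonempty) {α : ℝ} (hα : 0 < Real.sin α) (θ : ℝ) :
    ∃ b : ℝ, 0 ≤ b ∧ pp V (θ + α) = G V α θ + b * Complex.I * uu (θ + α) := by
  have h := perp (x := pp V (θ + α)) (y := G V α θ) (θ := θ + α) (by rw [G_dot2 V hα]; rfl)
  refine ⟨_, ?_, h⟩
  have h1 := le_hh (pp_mem hV (θ + α)) θ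
  rw [← G_dot V α, h, dot_addv, dot_I, show θ - (θ + α) = -α by ring, Real.sin_neg] at h1
  have : 0 ≤ (dt (pp V (θ + α)) (θ + α) - dt (G V α θ) (θ + α)) * Real.sin α := by linarith
  exact nonneg_of_mul_nonneg_left this hα

lemma W {V : Finset ℂ} {α : ℝ} (h0 : 0 < α) (hπ : α < π) {θ : ℝ} {x : ℂ}
    (hx : x ∈ V) (h : G V α θ = x) : pp V θ = x := by
  have hα := Real.sin_pos_of_pos_of_lt_pi h0 hπ
  exact btw1 hx (by rw [← h, G_dot]) (by rw [← h, G_dot2 V hα]) h0 hπ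

lemma qb' {V : Finset ℂ} (hV : V.Nonempty) {α : ℝ} (h0 : 0 < α) (hπ : α < π) {θ : ℝ}
    (hnd : ND V α θ) :
    ∃ b : ℝ, 0 < b ∧ pp V (θ + α) = G V α θ + b * Complex.I * uu (θ + α) := by
  have hα := Real.sin_pos_of_pos_of_lt_pi h0 hπ
  obtain ⟨b, hb, h⟩ := qb hV hα θ
  refine ⟨b, lt_of_le_of_ne hb ?_, h⟩
  rintro rfl
  simp at h
  exact hnd (W h0 hπ (pp_mem hV _) h.symm)

lemma G_of {V : Finset ℂ} {α : ℝ} (hα : 0 < Real.sin α) {x : ℂ} {θ : ℝ} (h1 : dot x θ = hh V θ)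
    (h2 : dot x (θ + α) = hh V (θ + α)) : G V α θ = x :=
  ext2 hα (θ := θ) (by rw [G_dot, h1]) (by rw [G_dot2 V hα, h2])

lemma fib {V : Finset ℂ} (hV : Good V) {α : ℝ} (h0 : 0 < α) (hπ : α < π) {a b : ℝ}
    (h : G V α a = G V α b) (na : ND V α a) (nb : ND V α b) : uu a = uu b := by
  have hα := Real.sin_pos_of_pos_of_lt_pi h0 hπ
  have key : ∀ a b, G V α a = G V α b → ND V α b → Real.sin (a - b) ≤ 0 := by
    intro a b h nb
    obtain ⟨r, hr, e⟩ := qb' hV.ne h0 hπ nb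
    have h1 := le_hh (pp_mem hV.ne (b + α)) (a + α)
    rw [← G_dot2 V hα, e, dot_addv, dot_I, h, show a + α - (b + α) = a - b by ring] at h1
    have : r * Real.sin (a - b) ≤ 0 := by linarith
    exact nonpos_of_mul_nonpos_right this hr
  have k1 := key a b h nb
  have k2 := key b a h.symm na
  rw [← neg_sub, Real.sin_neg] at k2
  have k3 : Real.sin (a - b) = 0 := by linarith
  have e : uu a = uu b * uu (a - b) := by rw [← uu_add]; congr 1; ring
  rcases Real.sin_eq_zero_iff_cos_eq.1 k3 with hc | hc
  · rw [e, uu_eq (a - b), k3, hc]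
    have : (⟨1, 0⟩ : ℂ) = 1 := rfl
    rw [this, mul_one]
  · exfalso
    have hn : ∀ v, dot v a = - dot v b := by
      intro v
      rw [show a = b + (a - b) by ring, dot_add, hc, k3]; ring
    obtain ⟨v, hv, w, hw, hvw⟩ := hV b
    have : ∀ v ∈ V, dot v b = dot (G V α b) b := by
      intro v hv
      have e1 := le_hh hv a
      have e2 := le_hh hv b
      rw [← G_dot V α, h, hn, hn] at e1
      rw [← G_dot V α] at e2
      linarith
    exact hvw (by rw [this v hv, this w hw])

lemma AE {V : Finset ℂ} (hV : Good V) {α : ℝ} (h0 : 0 < α) (hπ : α < π) {θ : ℝ}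
    (hn : ¬ ND V α θ) :
    ∃ θ2, θ < θ2 ∧ θ2 < θ + π ∧ pp V θ2 = pp V θ ∧ G V α θ2 = pp V θ ∧ ND V α θ2 ∧
      ∀ s, θ ≤ s → s ≤ θ2 → G V α s = pp V θ := by
  have hα := Real.sin_pos_of_pos_of_lt_pi h0 hπ
  have hxx : pp V θ = pp V (θ + α) := not_not.1 hn
  have hx := pp_mem hV.ne θ
  have hx0 : dot (pp V θ) θ = hh V θ := rfl
  have hx1 : dot (pp V θ) (θ + α) = hh V (θ + α) := by rw [hxx]; rfl
  generalize pp V θ = x at *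
  have hcl : IsCompact (Set.Icc (θ + α) (θ + π) ∩ {s | dot x s = hh V s}) := by
    apply isCompact_Icc.inter_right
    exact isClosed_eq (by unfold dot; fun_prop) (hh_cont hV.ne)
  obtain ⟨s1, ⟨⟨hs1, hs2⟩, hs3⟩, hmax⟩ := hcl.exists_isMaxOn
    (f := id) ⟨θ + α, ⟨le_rfl, by linarith⟩, hx1⟩ continuousOn_id
  have hs3' : dot x s1 = hh V s1 := hs3
  have hlt : s1 < θ + π := by
    apply lt_of_le_of_ne hs2
    rintro rfl
    obtain ⟨v, hv, w, hw, hvw⟩ := hV θ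
    have hn : ∀ v, dot v (θ + π) = - dot v θ := by
      intro v
      rw [dot_add]; simp
    have : ∀ v ∈ V, dot v θ = dot x θ := by
      intro v hv
      have e1 := le_hh hv θ
      have e2 := le_hh hv (θ + π)
      rw [← hs3', hn, hn] at e2
      linarith
    exact hvw (by rw [this v hv, this w hw])
  have hall : ∀ s, θ ≤ s → s ≤ s1 → dot x s = hh V s := by
    intro s h1 h2
    have := btw2 hx (s := θ) (τ := s1 - θ) (r := s - θ) hx0 (by simpa using hs3') (by linarith)
      (by linarith) (by linarith) (by linarith)
    simpa using this
  have hps : pp V s1 ≠ x := by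
    intro he
    obtain ⟨τ, hτ, h⟩ := rt hV.ne s1
    rw [he] at h
    have hm : 0 < min τ (θ + π - s1) := lt_min hτ (by linarith)
    have h1 := h _ hm.le (min_le_left _ _)
    have := hmax ⟨⟨by linarith, by linarith [min_le_right τ (θ + π - s1)]⟩, h1⟩
    simp only [id, Set.mem_setOf_eq] at this
    linarith
  have hG : ∀ s, θ ≤ s → s ≤ s1 - α → G V α s = x := fun s h1 h2 =>
    G_of hα (hall s h1 (by linarith)) (hall _ (by linarith) (by linarith))
  have hp : pp V (s1 - α) = x :=
    btw1 hx (τ := α) (hall _ (by linarith) (by linarith)) (hall _ (by linarith) (by linarith)) h0 hπ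
  refine ⟨s1 - α, ?_, by linarith, hp, hG _ (by linarith) le_rfl, ?_, hG⟩
  · rcases hs1.lt_or_eq with h | h
    · linarith
    · exact absurd (by rw [← h, ← hxx]) hps
  · unfold ND; rw [hp, sub_add_cancel]; exact hps.symm

section pair
variable {V V' : Finset ℂ} {α : ℝ}

lemma GF (hV : Good V) (hV' : Good V') (h0 : 0 < α) (hπ : α < π)
    (hr : Set.range (G V α) = Set.range (G V' α)) {θ θ' : ℝ} (h : G V α θ = G V' α θ')
    (n : ND V α θ) (n' : ND V' α θ') : cc V α θ = cc V' α θ' := by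
  have hα := Real.sin_pos_of_pos_of_lt_pi h0 hπ
  obtain ⟨θ'', h1, h2, h3⟩ := germ hV.ne hV'.ne hα hr.subset n
  have := fib hV' h0 hπ (h1.trans h) h3 n'
  rw [← h2, cc_congr V' α this]

lemma rr_rel (hα : 0 < Real.sin α) {θ θ' : ℝ} (h : G V α θ = G V' α θ')
    (hc : cc V α θ = cc V' α θ') (t : ℝ) :
    rr V α θ * uu (2 * (θ + t)) = rr V' α θ' * uu (2 * (θ' + t)) := by
  rw [G_eq V hα, G_eq V' hα, hc] at h
  have := add_left_cancel h
  rw [mul_add, mul_add, uu_add, uu_add, ← mul_assoc, ← mul_assoc, this]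

lemma GFr (hV : Good V) (hV' : Good V') (h0 : 0 < α) (hπ : α < π)
    (hr : Set.range (G V α) = Set.range (G V' α)) {θ θ' : ℝ} (h : G V α θ = G V' α θ')
    (n : ND V α θ) (n' : ND V' α θ') :
    ∃ τ > 0, ∀ t, 0 ≤ t → t ≤ τ → G V α (θ + t) = G V' α (θ' + t) := by
  have hα := Real.sin_pos_of_pos_of_lt_pi h0 hπ
  have hc := GF hV hV' h0 hπ hr h n n'
  obtain ⟨a, ha, h1⟩ := G_rt hV.ne hα θ
  obtain ⟨b, hb, h2⟩ := G_rt hV'.ne hα θ'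
  refine ⟨min a b, lt_min ha hb, fun t ht0 ht => ?_⟩
  rw [h1 t ht0 (ht.trans (min_le_left _ _)), h2 t ht0 (ht.trans (min_le_right _ _)), hc,
    rr_rel hα h hc]

end pair

lemma march {X : Type*} [TopologicalSpace X] [T2Space X] {f g : ℝ → X} (hf : Continuous f)
    (hg : Continuous g) {a b : ℝ} (hab : f a = g a)
    (hs : ∀ m, a ≤ m → m < b → (∀ s, a ≤ s → s ≤ m → f s = g s) →
      ∃ τ > 0, ∀ t, 0 ≤ t → t ≤ τ → f (m + t) = g (m + t)) :
    ∀ s, a ≤ s → s ≤ b → f s = g s := by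
  by_contra hcon
  push Not at hcon
  obtain ⟨s, hs1, hs2, hs3⟩ := hcon
  let B := {x | a ≤ x ∧ x ≤ b ∧ f x ≠ g x}
  have hB : s ∈ B := ⟨hs1, hs2, hs3⟩
  have hbd : BddBelow B := ⟨a, fun x hx => hx.1⟩
  let m := sInf B
  have ham : a ≤ m := le_csInf ⟨s, hB⟩ fun x hx => hx.1
  have hms : m ≤ s := csInf_le hbd hB
  have h1 : ∀ x, a ≤ x → x < m → f x = g x := by
    intro x hx1 hx2
    by_contra hne
    exact absurd (csInf_le hbd (show x ∈ B from ⟨hx1, by linarith, hne⟩)) (not_le.2 hx2)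
  have hcl : IsClosed {x | f x = g x} := isClosed_eq hf hg
  have h2 : f m = g m := by
    rcases ham.eq_or_lt with h | h
    · rw [← h]; exact hab
    · have : Set.Ico a m ⊆ {x | f x = g x} := fun x hx => h1 x hx.1 hx.2
      have := closure_minimal this hcl
      rw [closure_Ico h.ne] at this
      exact this ⟨h.le, le_rfl⟩
  have h3 : ∀ x, a ≤ x → x ≤ m → f x = g x := by
    intro x hx1 hx2
    rcases hx2.eq_or_lt with h | h
    · rw [h]; exact h2
    · exact h1 x hx1 h
  have hmb : m < b := by
    rcases (hms.trans hs2).eq_or_lt with h | h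
    · exact absurd (h3 s hs1 (by linarith)) hs3
    · exact h
  obtain ⟨τ, hτ, h⟩ := hs m ham hmb h3
  obtain ⟨x, hx, hxl⟩ := exists_lt_of_csInf_lt ⟨s, hB⟩ (show sInf B < m + τ by
    change m < m + τ; linarith)
  have hmx : m ≤ x := csInf_le hbd hx
  have := h (x - m) (by linarith) (by linarith)
  rw [add_sub_cancel] at this
  exact hx.2.2 this

end Cl

namespace Cl

section pair
variable {V V' : Finset ℂ} {α : ℝ}

lemma cen_q (hα : 0 < Real.sin α) {p q q' : ℂ} (h : cen α p q = cen α p q') : q = q' := by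
  have hne : (Real.sin α : ℂ) ≠ 0 := by exact_mod_cast hα.ne'
  unfold cen at h
  rw [div_left_inj' (by simpa using hne)] at h
  have := sub_left_inj.1 (mul_left_cancel₀ Complex.I_ne_zero h)
  exact mul_left_cancel₀ (uu_ne _) this

lemma Nct (hV : Good V) (hV' : Good V') (h0 : 0 < α) (hπ : α < π)
    (hr : Set.range (G V α) = Set.range (G V' α)) {θ0 θ1 : ℝ} (hlt : θ0 < θ1)
    (he : ∀ s, θ0 ≤ s → s ≤ θ1 → G V α s = G V' α s) (n : ¬ ND V α θ1) (n' : ND V' α θ1) :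
    False := by
  have hα := Real.sin_pos_of_pos_of_lt_pi h0 hπ
  obtain ⟨θ2, a1, a2, a3, a4, a5, a6⟩ := AE hV h0 hπ n
  have hG := a6 θ1 le_rfl a1.le
  have hx0 : dot (pp V θ1) θ1 = hh V θ1 := rfl
  have hx1 : dot (pp V θ1) (θ1 + α) = hh V (θ1 + α) := by rw [← hG, G_dot2 V hα]
  have hx := pp_mem hV.ne θ1
  generalize pp V θ1 = x at *
  obtain ⟨t0, ht0, ht1, ht2⟩ : ∃ t0, θ0 ≤ t0 ∧ θ1 - α ≤ t0 ∧ t0 < θ1 :=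
    ⟨max θ0 (θ1 - α), le_max_left _ _, le_max_right _ _, max_lt hlt (by linarith)⟩
  have key : ∀ t, t0 ≤ t → t ≤ θ1 → dot x (t + α) = hh V' (t + α) := by
    intro t h1 h2
    rw [← G_dot2 V' hα, ← he t (by linarith) h2, G_dot2 V hα]
    have := btw2 hx (r := t + α - θ1) hx0 hx1 h0 hπ (by linarith) (by linarith)
    rwa [add_sub_cancel] at this
  obtain ⟨τ, hτ, hrt⟩ := rt hV'.ne (t0 + α)
  obtain ⟨d, hd0, hd1, hd2⟩ : ∃ d, 0 < d ∧ d ≤ τ ∧ d ≤ θ1 - t0 :=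
    ⟨min τ (θ1 - t0), lt_min hτ (by linarith), min_le_left _ _, min_le_right _ _⟩
  have hx' : pp V' (t0 + α) = x := by
    have hd := Real.sin_pos_of_pos_of_lt_pi hd0 (by linarith)
    apply ext2 hd (θ := t0 + α)
    · rw [key t0 le_rfl ht2.le]; rfl
    · rw [hrt d hd0.le hd1, add_right_comm, key (t0 + d) (by linarith) (by linarith)]
  have hxV' : x ∈ V' := hx' ▸ pp_mem hV'.ne _
  have hG' : G V' α θ1 = x := by rw [← he θ1 hlt.le le_rfl, hG]
  have hp' := W h0 hπ hxV' hG'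
  have hc := GF hV hV' h0 hπ hr (a4.trans hG'.symm) a5 n'
  have hq : pp V (θ2 + α) = pp V' (θ1 + α) := by
    unfold cc at hc
    rw [a3, hp'] at hc
    exact cen_q hα hc
  have hrr := rr_rel hα (a4.trans hG'.symm) hc 0
  have : rr V α θ2 = rr V' α θ1 := by unfold rr; rw [hq, hp', a3]
  rw [this, add_zero, add_zero] at hrr
  have hrn : rr V' α θ1 ≠ 0 := (rho_ne hα).2 n'
  have := uu_inj (mul_left_cancel₀ hrn hrr) (by rw [abs_lt]; constructor <;> linarith)
  linarith

lemma hh_of_G {V V' : Finset ℂ} {α θ0 : ℝ}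
    (h : ∀ s, θ0 ≤ s → s ≤ θ0 + 2 * π → G V α s = G V' α s) (θ : ℝ) : hh V θ = hh V' θ := by
  obtain ⟨s, ⟨h1, h2⟩, h3⟩ := exists_rep (θ - θ0)
  have e : uu (θ0 + s) = uu θ := by
    have := uu_shift h3 θ0
    rwa [sub_add_cancel, add_comm] at this
  rw [← hh_congr V e, ← hh_congr V' e, ← G_dot V α, ← G_dot V' α, h _ (by linarith) (by linarith)]

lemma IIa (hV : Good V) (hV' : Good V') (h0 : 0 < α) (hπ : α < π)
    (hr : Set.range (G V α) = Set.range (G V' α)) {θ0 : ℝ} (hG : G V α θ0 = G V' α θ0)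
    (n : ND V α θ0) (n' : ND V' α θ0) (θ : ℝ) : hh V θ = hh V' θ := by
  refine hh_of_G (α := α) (θ0 := θ0) (march (G_cont hV.ne α) (G_cont hV'.ne α) hG ?_) θ
  intro m hm1 hm2 hs
  by_cases hn : ND V α m
  · by_cases hn' : ND V' α m
    · exact GFr hV hV' h0 hπ hr (hs m hm1 le_rfl) hn hn'
    · exfalso
      rcases hm1.eq_or_lt with h | h
      · rw [← h] at hn'; exact hn' n'
      · exact Nct hV' hV h0 hπ hr.symm h (fun s h1 h2 => (hs s h1 h2).symm) hn' hn
  · by_cases hn' : ND V' α m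
    · exfalso
      rcases hm1.eq_or_lt with h | h
      · rw [← h] at hn; exact hn n
      · exact Nct hV hV' h0 hπ hr h hs hn hn'
    · obtain ⟨a, a1, -, -, -, -, a6⟩ := AE hV h0 hπ hn
      obtain ⟨b, b1, -, -, -, -, b6⟩ := AE hV' h0 hπ hn'
      refine ⟨min (a - m) (b - m), lt_min (by linarith) (by linarith), fun t ht0 ht => ?_⟩
      have h1 := ht.trans (min_le_left _ _)
      have h2 := ht.trans (min_le_right _ _)
      have h3 := hs m hm1 le_rfl
      rw [a6 m le_rfl a1.le, b6 m le_rfl b1.le] at h3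
      rw [a6 (m + t) (by linarith) (by linarith), b6 (m + t) (by linarith) (by linarith), h3]

lemma cen_x (hα : 0 < Real.sin α) (x : ℂ) (a b θ : ℝ) :
    cen α (x - a * Complex.I * uu θ) (x + b * Complex.I * uu (θ + α)) =
      x - uu θ * (b + a * uu α) / (2 * Real.sin α) := by
  have hne : (Real.sin α : ℂ) ≠ 0 := by exact_mod_cast hα.ne'
  have h2 : (2 * (Real.sin α : ℂ)) ≠ 0 := by simpa using hne
  unfold cen
  rw [div_eq_iff h2, sub_mul, div_mul_cancel₀ _ h2, uu_add]
  linear_combination (-x) * sin_cast α + (uu (-α) * b * uu α + a * uu α) * uu θ * Complex.I_sq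
    - b * uu θ * uu_neg α

lemma phase (hV : Good V) (hV' : Good V') (h0 : 0 < α) (hπ : α < π) {θ0 θ' : ℝ}
    (hp : pp V θ0 = G V α θ0) (n : ND V α θ0) (hG : G V' α θ' = G V α θ0)
    (hc : cc V' α θ' = cc V α θ0) (n' : ND V' α θ') :
    ∃ ε, 0 ≤ ε ∧ ε < α ∧ uu θ' = uu (θ0 - ε) := by
  have hα := Real.sin_pos_of_pos_of_lt_pi h0 hπ
  have hne : (Real.sin α : ℂ) ≠ 0 := by exact_mod_cast hα.ne'
  have h2 : (2 * (Real.sin α : ℂ)) ≠ 0 := by simpa using hne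
  obtain ⟨b0, hb0, e0⟩ := qb' hV.ne h0 hπ n
  obtain ⟨b, hb, e1⟩ := qb' hV'.ne h0 hπ n'
  obtain ⟨a, ha, e2⟩ := pa hV'.ne hα θ'
  have c0 := cen_x hα (G V α θ0) 0 b0 θ0
  have c1 := cen_x hα (G V' α θ') a b θ'
  rw [← e0] at c0
  rw [← e1, ← e2] at c1
  simp only [Complex.ofReal_zero, zero_mul, sub_zero, add_zero] at c0
  rw [← hp] at c0
  have c3 : uu θ' * (b + a * uu α) = uu θ0 * b0 := by
    have : cen α (pp V' θ') (pp V' (θ' + α)) = cen α (pp V θ0) (pp V (θ0 + α)) := hc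
    rw [c0, c1, hG, hp] at this
    have := sub_right_inj.1 this
    exact (div_left_inj' h2).1 this
  set z : ℂ := b + a * uu α with hz
  have zim : z.im = a * Real.sin α := by simp [hz, uu_im, uu_re]
  have zre : z.re = b + a * Real.cos α := by simp [hz, uu_im, uu_re]
  have znorm : ‖z‖ = b0 := by
    have := congrArg norm c3
    rwa [norm_mul, norm_mul, uu_norm, uu_norm, one_mul, one_mul, Complex.norm_real,
      Real.norm_of_nonneg hb0.le] at this
  have hz2 : z = b0 * uu z.arg := by
    rw [← znorm]; exact (Complex.norm_mul_exp_arg_mul_I z).symm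
  have him : 0 ≤ z.im := by rw [zim]; positivity
  have ha0 : 0 ≤ z.arg := Complex.arg_nonneg_iff.2 him
  have hap := Complex.arg_le_pi z
  refine ⟨z.arg, ha0, ?_, ?_⟩
  · by_contra hcon
    push Not at hcon
    have h3 : 0 ≤ Real.sin (z.arg - α) := Real.sin_nonneg_of_nonneg_of_le_pi (by linarith) (by linarith)
    have r1 : z.re = b0 * Real.cos z.arg := by
      have := congrArg Complex.re hz2
      rwa [Complex.re_ofReal_mul, uu_re] at this
    have r2 : z.im = b0 * Real.sin z.arg := by
      have := congrArg Complex.im hz2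
      rwa [Complex.im_ofReal_mul, uu_im] at this
    have : b0 * Real.sin (z.arg - α) = - b * Real.sin α := by
      rw [Real.sin_sub]
      rw [zre] at r1; rw [zim] at r2
      linear_combination (-Real.cos α) * r2 + Real.sin α * r1
    have h4 := mul_nonneg hb0.le h3
    have h5 := mul_pos hb hα
    linarith
  · have hb0' : (b0 : ℂ) ≠ 0 := by exact_mod_cast hb0.ne'
    have e : uu θ0 = uu (θ0 - z.arg) * uu z.arg := by rw [← uu_add, sub_add_cancel]
    rw [hz2, e] at c3
    have : (uu z.arg * b0) ≠ 0 := mul_ne_zero (uu_ne _) hb0'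
    apply mul_right_cancel₀ this
    linear_combination c3

end pair
end Cl

namespace Cl

lemma kap_dot1 {α : ℝ} (hα : 0 < Real.sin α) (p q : ℂ) (θ : ℝ) :
    dot (kap α p q θ) θ = dot p θ := by rw [kap_eq hα, dot_mk]
lemma kap_dot2 {α : ℝ} (hα : 0 < Real.sin α) (p q : ℂ) (θ : ℝ) :
    dot (kap α p q θ) (θ + α) = dot q (θ + α) := by
  rw [kap_eq hα, dot_add, dot_mk, dt_mk]; field_simp; ring

lemma conj_uu (a : ℝ) : starRingEnd ℂ (uu a) = uu (-a) := by
  rw [uu_eq, uu_eq, Real.cos_neg, Real.sin_neg]; rfl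

/-- The extension of the arc starting at parameter `θ`. -/
def K (V : Finset ℂ) (α θ t : ℝ) : ℂ := cc V α θ + rr V α θ * uu (2 * (θ + t))

lemma K_kap (V : Finset ℂ) (α θ t : ℝ) :
    K V α θ t = kap α (pp V θ) (pp V (θ + α)) (θ + t) := rfl

lemma K_zero (V : Finset ℂ) {α : ℝ} (hα : 0 < Real.sin α) (θ : ℝ) : K V α θ 0 = G V α θ := by
  rw [G_eq V hα, K, add_zero]

lemma K_cont (V : Finset ℂ) (α θ : ℝ) : Continuous (K V α θ) := by
  have := uu_cont
  unfold K; fun_prop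

lemma K_inj {V : Finset ℂ} {α : ℝ} (hα : 0 < Real.sin α) {θ : ℝ} (n : ND V α θ) {t s : ℝ}
    (h : K V α θ t = K V α θ s) (h1 : |t - s| < π) : t = s := by
  unfold K at h
  have hrn : rr V α θ ≠ 0 := (rho_ne hα).2 n
  have := uu_inj (mul_left_cancel₀ hrn (add_left_cancel h)) (by
    rw [abs_lt] at *; constructor <;> linarith)
  linarith

def AtE (V : Finset ℂ) (α θ : ℝ) : Prop := pp V θ = G V α θ ∧ ND V α θ

section pair
variable {V V' : Finset ℂ} {α : ℝ}

lemma AtE.pp0 (hV : Good V) (h0 : 0 < α) (hπ : α < π) {θ t : ℝ} (h : pp V θ = G V α θ)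
    (ht : 0 ≤ t) (ht2 : t < α) : pp V (θ + t) = pp V θ := by
  have hα := Real.sin_pos_of_pos_of_lt_pi h0 hπ
  have hx := pp_mem hV.ne θ
  have h1 : dot (pp V θ) θ = hh V θ := rfl
  have h2 : dot (pp V θ) (θ + α) = hh V (θ + α) := by rw [h, G_dot2 V hα]
  refine btw1 hx (τ := α - t) (btw2 hx h1 h2 h0 hπ ht ht2.le) ?_ (by linarith) (by linarith)
  rw [show θ + t + (α - t) = θ + α by ring]; exact h2

lemma KK (hα : 0 < Real.sin α) {θ θ' : ℝ} (h : G V' α θ' = G V α θ)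
    (hc : cc V' α θ' = cc V α θ) (t : ℝ) : K V' α θ' t = K V α θ t := by
  unfold K; rw [hc, rr_rel hα h hc]

lemma shiftp (hV : Good V) {θ : ℝ} {q : ℂ} (hq : q ∈ V) (h : dot q θ = hh V θ) :
    ∃ l : ℝ, 0 ≤ l ∧ pp V θ = q + l * Complex.I * uu θ :=
  ⟨_, sub_nonneg.2 (pp_dt hq h), perp (x := pp V θ) (y := q) h.symm⟩

lemma cen_shift (hα : 0 < Real.sin α) (p q : ℂ) (l m θ : ℝ) :
    cen α (p + m * Complex.I * uu θ) (q + l * Complex.I * uu (θ + α)) =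
      cen α p q - uu θ * (l - m * uu α) / (2 * Real.sin α) := by
  have hne : (Real.sin α : ℂ) ≠ 0 := by exact_mod_cast hα.ne'
  have h2 : (2 * (Real.sin α : ℂ)) ≠ 0 := by simpa using hne
  unfold cen
  rw [div_eq_iff h2, sub_mul, div_mul_cancel₀ _ h2, div_mul_cancel₀ _ h2, uu_add]
  linear_combination (uu (-α) * l * uu α - m * uu α) * uu θ * Complex.I_sq
    - l * uu θ * uu_neg α

lemma U (hV : Good V) (hV' : Good V') (h0 : 0 < α) (hπ : α < π)
    (hr : Set.range (G V α) = Set.range (G V' α)) {θ0 ε t : ℝ} (he0 : 0 < ε) (he1 : ε < α)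
    (hA : AtE V α θ0) (hG : G V' α (θ0 - ε) = G V α θ0)
    (hc : cc V' α (θ0 - ε) = cc V α θ0) 
    (ht0 : 0 ≤ t) (ht1 : t < α) (hK : G V α (θ0 + t) = K V α θ0 t)
    (hK' : G V' α (θ0 - ε + t) = K V α θ0 t) (m : ND V α (θ0 + t)) (m' : ND V' α (θ0 - ε + t)) :
    pp V (θ0 + t + α) = pp V (θ0 + α) ∧ pp V' (θ0 - ε + t) = pp V' (θ0 - ε) ∧
      pp V' (θ0 - ε + t + α) = pp V' (θ0 - ε + α) := by
  have hα := Real.sin_pos_of_pos_of_lt_pi h0 hπ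
  have hne : (Real.sin α : ℂ) ≠ 0 := by exact_mod_cast hα.ne'
  have h2 : (2 * (Real.sin α : ℂ)) ≠ 0 := by simpa using hne
  have hp := AtE.pp0 hV h0 hπ hA.1 ht0 ht1
  have hcc := GF hV hV' h0 hπ hr (hK.trans hK'.symm) m m'
  have hK2 := hK'
  rw [← KK hα hG hc] at hK2
  obtain ⟨l, hl, e1⟩ := shiftp hV (θ := θ0 + t + α) (pp_mem hV.ne (θ0 + α)) (by
    rw [← G_dot2 V hα, hK, K_kap, kap_dot2 hα])
  obtain ⟨l', hl', e2⟩ := shiftp hV' (θ := θ0 - ε + t + α) (pp_mem hV'.ne (θ0 - ε + α)) (by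
    rw [← G_dot2 V' hα, hK2, K_kap, kap_dot2 hα])
  obtain ⟨k, hk, e3⟩ := shiftp hV' (θ := θ0 - ε + t) (pp_mem hV'.ne (θ0 - ε)) (by
    rw [← G_dot V' α, hK2, K_kap, kap_dot1 hα])
  have c1 := cen_shift hα (pp V θ0) (pp V (θ0 + α)) l 0 (θ0 + t)
  have c2 := cen_shift hα (pp V' (θ0 - ε)) (pp V' (θ0 - ε + α)) l' k (θ0 - ε + t)
  rw [← e1] at c1
  rw [← e2, ← e3] at c2
  simp only [Complex.ofReal_zero, zero_mul, sub_zero, add_zero] at c1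
  have c3 : cen α (pp V θ0) (pp V (θ0 + t + α)) =
      cen α (pp V' (θ0 - ε + t)) (pp V' (θ0 - ε + t + α)) := by rw [← hp]; exact hcc
  have c4 : cen α (pp V' (θ0 - ε)) (pp V' (θ0 - ε + α)) = cen α (pp V θ0) (pp V (θ0 + α)) := hc
  rw [c1, c2, c4] at c3
  have c5 := (div_left_inj' h2).1 (sub_right_inj.1 c3)
  rw [show θ0 + t = (θ0 - ε + t) + ε by ring, uu_add, mul_assoc] at c5
  have c6 := mul_left_cancel₀ (uu_ne _) c5
  have i1 := congrArg Complex.im c6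
  have i2 := congrArg Complex.re c6
  simp [uu_im, uu_re] at i1 i2
  have hse := Real.sin_pos_of_pos_of_lt_pi he0 (by linarith)
  have k0 : k = 0 := by
    have := mul_nonneg hl hse.le
    have h3 : k * Real.sin α ≤ 0 := by linarith
    have := nonpos_of_mul_nonpos_left h3 hα
    linarith
  have l0 : l = 0 := by
    rw [k0] at i1
    have : l * Real.sin ε = 0 := by linarith
    rcases mul_eq_zero.1 this with h | h
    · exact h
    · exact absurd h hse.ne'
  have l0' : l' = 0 := by rw [k0, l0] at i2; linarith
  subst k0 l0 l0'
  simp at e1 e2 e3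
  exact ⟨e1, e3, e2⟩

structure Half (V V' : Finset ℂ) (α θ ε : ℝ) : Prop where
  e0 : 0 < ε
  e1 : ε < α
  g0 : G V' α (θ - ε) = G V α θ
  c0 : cc V' α (θ - ε) = cc V α θ
  n0 : ND V' α (θ - ε)
  g1 : ∀ t, 0 ≤ t → t ≤ α - ε → G V α (θ + t) = K V α θ t
  g2 : ∀ t, 0 ≤ t → t ≤ α - ε → G V' α (θ - ε + t) = K V α θ t
  p1 : ∀ t, 0 ≤ t → t < α - ε → pp V (θ + t + α) = pp V (θ + α)
  p2 : ∀ t, 0 ≤ t → t < α - ε → pp V' (θ - ε + t) = pp V' (θ - ε)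
  p3 : ∀ t, 0 ≤ t → t < α - ε → pp V' (θ - ε + t + α) = pp V' (θ - ε + α)
  n1 : ND V α (θ + (α - ε))
  n2 : ¬ ND V' α (θ - ε + (α - ε))
  q1 : K V α θ (α - ε) = pp V' (θ - ε + α)

lemma AtE_q (h0 : 0 < α) (hπ : α < π) (hV : Good V) {θ0 ε : ℝ} (hA : AtE V α θ0)
    (hG : G V' α (θ0 - ε) = G V α θ0) (hc : cc V' α (θ0 - ε) = cc V α θ0) :
    K V α θ0 (α - ε) = pp V' (θ0 - ε + α) := by
  have hα := Real.sin_pos_of_pos_of_lt_pi h0 hπ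
  have hne : (Real.sin α : ℂ) ≠ 0 := by exact_mod_cast hα.ne'
  have h2 : (2 * (Real.sin α : ℂ)) ≠ 0 := by simpa using hne
  obtain ⟨b0, hb0, eq⟩ := qb' hV.ne h0 hπ hA.2
  rw [← hA.1] at eq
  have hrr := rr_rel hα hG hc 0
  rw [← KK hα hG hc, K_kap]
  simp only [rr, rho] at hrr
  have e1 : (starRingEnd ℂ (pp V' (θ0 - ε + α)) - starRingEnd ℂ (pp V' (θ0 - ε))) * uu (2 * (θ0 - ε)) =
      (starRingEnd ℂ (pp V (θ0 + α)) - starRingEnd ℂ (pp V θ0)) * uu (2 * θ0) := by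
    rw [div_mul_eq_mul_div, div_mul_eq_mul_div, div_left_inj' h2,
      add_zero, add_zero] at hrr
    apply mul_left_cancel₀ (mul_ne_zero Complex.I_ne_zero (uu_ne α))
    linear_combination hrr
  have e2 : pp V' (θ0 - ε + α) = pp V' (θ0 - ε) + b0 * Complex.I * uu (θ0 + α - 2 * ε) := by
    rw [eq] at e1
    have := congrArg (starRingEnd ℂ) e1
    simp only [map_mul, map_sub, map_add, Complex.conj_conj, conj_uu, neg_neg] at this
    have h3 : uu (-(2 * θ0)) = uu (-(2 * (θ0 - ε))) * uu (-(2 * ε)) := by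
      rw [← uu_add]; congr 1; ring
    have h4 : uu (θ0 + α - 2 * ε) = uu (θ0 + α) * uu (-(2 * ε)) := by
      rw [← uu_add]; congr 1
    rw [h3] at this
    rw [h4]
    apply mul_right_cancel₀ (uu_ne (-(2 * (θ0 - ε))))
    linear_combination this
  apply ext2 hα (θ := θ0 - ε + (α - ε))
  · rw [kap_dot1 hα, e2, dot_addv, dot_I, show θ0 - ε + (α - ε) - (θ0 + α - 2 * ε) = 0 by ring]
    simp
  · rw [kap_dot2 hα]

lemma half (hV : Good V) (hV' : Good V') (h0 : 0 < α) (hπ : α < π)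
    (hr : Set.range (G V α) = Set.range (G V' α)) (hne : ¬ ∀ θ, hh V θ = hh V' θ) {θ0 : ℝ}
    (hA : AtE V α θ0) : ∃ ε, Half V V' α θ0 ε := by
  have hα := Real.sin_pos_of_pos_of_lt_pi h0 hπ
  obtain ⟨θ', hG, hc, n'⟩ := germ hV.ne hV'.ne hα hr.subset hA.2
  obtain ⟨ε, he0, he1, hu⟩ := phase hV hV' h0 hπ hA.1 hA.2 hG hc n'
  rw [G_congr V' α hu] at hG
  rw [cc_congr V' α hu] at hc
  rw [ND_congr V' α hu] at n'
  have he0 : 0 < ε := by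
    rcases he0.eq_or_lt with h | h
    · exfalso; rw [← h, sub_zero] at hG n'
      exact hne (IIa hV hV' h0 hπ hr hG.symm hA.2 n')
    · exact h
  have hq := AtE_q h0 hπ hV hA hG hc
  have n1 : ∀ m, 0 ≤ m → m < α → G V α (θ0 + m) = K V α θ0 m → ND V α (θ0 + m) := by
    intro m hm0 hm1 hm
    by_contra hn
    obtain ⟨a, a1, -, -, -, -, a6⟩ := AE hV h0 hπ hn
    have h1 := a6 _ le_rfl a1.le
    rw [AtE.pp0 hV h0 hπ hA.1 hm0 hm1, hA.1, hm, ← K_zero V hα] at h1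
    have := K_inj hα hA.2 h1 (by rw [sub_zero, abs_of_nonneg hm0]; linarith)
    rw [this, add_zero] at hn
    exact hn hA.2
  have n2 : ∀ m, 0 ≤ m → m < α - ε → G V' α (θ0 - ε + m) = K V α θ0 m →
      ND V' α (θ0 - ε + m) := by
    intro m hm0 hm1 hm
    by_contra hn
    have hm0 : 0 < m := by
      rcases hm0.eq_or_lt with h | h
      · rw [← h, add_zero] at hn; exact absurd n' hn
      · exact h
    obtain ⟨a, a1, -, -, -, -, a6⟩ := AE hV' h0 hπ hn
    have h1 := a6 _ le_rfl a1.le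
    have hx := pp_mem hV'.ne (θ0 - ε + m)
    have hx0 : dot (pp V' (θ0 - ε + m)) (θ0 - ε + m) = hh V' (θ0 - ε + m) := rfl
    have hx1 : dot (pp V' (θ0 - ε + m)) (θ0 - ε + m + α) = hh V' (θ0 - ε + m + α) := by
      rw [← h1, G_dot2 V' hα]
    have hx2 := btw2 hx (r := α - m) hx0 hx1 h0 hπ (by linarith) (by linarith)
    rw [show θ0 - ε + m + (α - m) = θ0 - ε + α by ring] at hx2
    have := btw1 hx (s := θ0 - ε + α) (τ := m) hx2 (by rw [add_right_comm]; exact hx1) hm0 (by linarith)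
    rw [← h1, hm, ← hq] at this
    have := K_inj hα hA.2 this (by rw [abs_lt]; constructor <;> linarith)
    linarith
  have hU := fun t a b c d e f => U hV hV' h0 hπ hr (t := t) he0 he1 hA hG hc a b c d e f
  have hm := march (f := fun t => (G V α (θ0 + t), G V' α (θ0 - ε + t)))
    (g := fun t => (K V α θ0 t, K V α θ0 t)) (a := 0) (b := α - ε)
    (by have := G_cont hV.ne α; have := G_cont hV'.ne α; fun_prop)
    (by have := K_cont V α θ0; fun_prop)
    (by simp only [add_zero]; rw [hG, K_zero V hα])
    (by
      intro m hm0 hm1 hs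
      have hm := hs m hm0 le_rfl
      simp only [Prod.mk.injEq] at hm
      have m1 := n1 m hm0 (by linarith) hm.1
      have m2 := n2 m hm0 hm1 hm.2
      obtain ⟨u1, u2, u3⟩ := hU m hm0 (by linarith) hm.1 hm.2 m1 m2
      obtain ⟨a, ha, h1⟩ := G_rt hV.ne hα (θ0 + m)
      obtain ⟨b, hb, h2⟩ := G_rt hV'.ne hα (θ0 - ε + m)
      refine ⟨min a b, lt_min ha hb, fun t ht0 ht => ?_⟩
      have h1 := h1 t ht0 (ht.trans (min_le_left _ _))
      have h2 := h2 t ht0 (ht.trans (min_le_right _ _))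
      rw [cc, rr, AtE.pp0 hV h0 hπ hA.1 hm0 (by linarith), u1, add_assoc] at h1
      rw [cc, rr, u2, u3, add_assoc] at h2
      simp only [Prod.mk.injEq]
      refine ⟨h1, ?_⟩
      rw [← KK hα hG hc]; exact h2)
  simp only [Prod.mk.injEq] at hm
  have u := fun t (a : 0 ≤ t) (b : t < α - ε) => hU t a (by linarith) (hm t a b.le).1 (hm t a b.le).2
    (n1 t a (by linarith) (hm t a b.le).1) (n2 t a b (hm t a b.le).2)
  have nn := n1 (α - ε) (by linarith) (by linarith) (hm _ (by linarith) le_rfl).1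
  refine ⟨ε, he0, he1, hG, hc, n', fun t a b => (hm t a b).1, fun t a b => (hm t a b).2,
    fun t a b => (u t a b).1, fun t a b => (u t a b).2.1, fun t a b => (u t a b).2.2, nn, ?_, hq⟩
  intro hn
  have hm1 := hm (α - ε) (by linarith) le_rfl
  obtain ⟨-, -, u3⟩ := hU (α - ε) (by linarith) (by linarith) hm1.1 hm1.2 nn hn
  have := W h0 hπ (pp_mem hV'.ne (θ0 - ε + (α - ε) + α)) (by rw [u3, ← hq]; exact hm1.2)
  exact hn this

end pair
end Cl

namespace Cl
section pair
variable {V V' : Finset ℂ} {α : ℝ}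

structure Stp (V V' : Finset ℂ) (α θ θ1 t2 : ℝ) : Prop where
  a : AtE V' α θ1
  c : cc V' α θ1 = cc V α θ
  t0 : 0 < t2
  t1 : t2 < α
  g : G V' α (θ1 + t2) = G V α (θ + α)
  q : ∀ t, 0 ≤ t → t < α → pp V (θ + t + α) = pp V (θ + α)
  k : ∀ t, 0 ≤ t → t ≤ α → G V α (θ + t) = K V α θ t
  n : ¬ ND V α (θ + α)

lemma stp (hV : Good V) (hV' : Good V') (h0 : 0 < α) (hπ : α < π)
    (hr : Set.range (G V α) = Set.range (G V' α)) (hne : ¬ ∀ θ, hh V θ = hh V' θ) {θ0 : ℝ}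
    (hA : AtE V α θ0) : ∃ θ1 t2, Stp V V' α θ0 θ1 t2 := by
  have hα := Real.sin_pos_of_pos_of_lt_pi h0 hπ
  obtain ⟨ε, H⟩ := half hV hV' h0 hπ hr hne hA
  have he0 := H.e0
  have he1 := H.e1
  obtain ⟨θ1, a1, a2, a3, a4, a5, a6⟩ := AE hV' h0 hπ H.n2
  have hA' : AtE V' α θ1 := ⟨by rw [a3, a4], a5⟩
  have hx1 : G V' α θ1 = G V α (θ0 + (α - ε)) := by
    rw [a4, ← a6 _ le_rfl a1.le, H.g1 _ (by linarith) le_rfl, H.g2 _ (by linarith) le_rfl]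
  obtain ⟨ε', H'⟩ := half hV' hV h0 hπ hr.symm (fun h => hne fun θ => (h θ).symm) hA'
  have he0' := H'.e0
  have he1' := H'.e1
  have hu : uu (θ1 - ε') = uu (θ0 + (α - ε)) := fib hV h0 hπ (H'.g0.trans hx1) H'.n0 H.n1
  have hut : ∀ t, uu (θ1 - ε' + t) = uu (θ0 + (α - ε + t)) := by
    intro t; rw [uu_shift hu t, add_assoc]
  have hp : ∀ t, 0 ≤ t → t < α → pp V (θ0 + t) = pp V θ0 := fun t a b =>
    AtE.pp0 hV h0 hπ hA.1 a b
  have hpψ : pp V (θ1 - ε') = pp V θ0 := by rw [pp_congr V hu, hp _ (by linarith) (by linarith)]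
  have hGq : G V α (θ1 - ε' + (α - ε')) = pp V (θ1 - ε' + α) := by
    rw [H'.g2 _ (by linarith) le_rfl, H'.q1]
  have hpq : pp V (θ1 - ε' + (α - ε')) = pp V (θ1 - ε' + α) := W h0 hπ (pp_mem hV.ne _) hGq
  have hq2 : pp V (θ1 - ε' + α) ≠ pp V θ0 := by
    have := H'.n0
    unfold ND at this
    rw [hpψ] at this; exact this.symm
  have hsum : α - ε + (α - ε') = α := by
    rcases lt_trichotomy (α - ε + (α - ε')) α with h | h | h
    · exfalso
      apply hq2
      rw [← hpq, pp_congr V (hut _), hp _ (by linarith) h]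
    · exact h
    · exfalso
      have h1 := H'.p2 ε (by linarith) (by linarith)
      rw [pp_congr V (hut _), hpψ, sub_add_cancel] at h1
      exact hA.2 h1.symm
  have hqq : pp V (θ1 - ε' + α) = pp V (θ0 + α) := by
    rw [← hpq, pp_congr V (hut _), hsum]
  have hua : uu (θ1 - ε' + (α - ε')) = uu (θ0 + α) := by rw [hut, hsum]
  have hq : ∀ t, 0 ≤ t → t < α → pp V (θ0 + t + α) = pp V (θ0 + α) := by
    intro t ht0 ht1
    by_cases h : t < α - ε
    · exact H.p1 t ht0 h
    · push Not at h
      have := H'.p3 (t - (α - ε)) (by linarith) (by linarith)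
      rw [pp_congr V (uu_shift (hut _) α), hqq, add_sub_cancel] at this
      exact this
  refine ⟨θ1, α - ε', hA', ?_, by linarith, by linarith, ?_, hq, ?_, ?_⟩
  · rw [← H'.c0]; unfold cc; rw [hpψ, hqq]
  · rw [H'.g1 _ (by linarith) le_rfl, ← H'.g2 _ (by linarith) le_rfl, G_congr V α hua]
  · intro t ht0 ht1
    rcases ht1.lt_or_eq with h | h
    · rw [G_eq V hα]
      unfold cc rr
      rw [hq t ht0 h, hp t ht0 h]; rfl
    · rw [h, ← G_congr V α hua, H'.g2 _ (by linarith) le_rfl, ← KK hα H'.g0 H'.c0]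
      unfold K cc rr
      rw [hpψ, hqq, show ∀ x : ℝ, 2 * x = x + x from fun x => by ring, uu_add, hua, ← uu_add,
        ← two_mul]
  · rw [← ND_congr V α hua]; exact H'.n2

lemma stp2 (hV : Good V) (hV' : Good V') (h0 : 0 < α) (hπ : α < π)
    (hr : Set.range (G V α) = Set.range (G V' α)) (hne : ¬ ∀ θ, hh V θ = hh V' θ) {θ0 : ℝ}
    (hA : AtE V α θ0) : ∃ θ2, θ0 + α < θ2 ∧ AtE V α θ2 ∧ cc V α θ2 = cc V α θ0 ∧
      (∀ t, 0 ≤ t → t ≤ α → G V α (θ0 + t) = K V α θ0 t) ∧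
      ∀ s, θ0 + α ≤ s → s ≤ θ2 → G V α s = K V α θ0 α := by
  obtain ⟨θ1, t2, S⟩ := stp hV hV' h0 hπ hr hne hA
  obtain ⟨θ3, t3, S'⟩ := stp hV' hV h0 hπ hr.symm (fun h => hne fun θ => (h θ).symm) S.a
  obtain ⟨θ2, a1, a2, a3, a4, a5, a6⟩ := AE hV h0 hπ S.n
  have hst := a6 _ le_rfl a1.le
  have e1 := S'.q t2 S.t0.le S.t1
  have e2 := AtE.pp0 hV' h0 hπ S.a.1 S.t0.le S.t1
  have hc : cc V' α (θ1 + t2) = cc V' α θ1 := by unfold cc; rw [e1, e2]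
  have hn : ND V' α (θ1 + t2) := by unfold ND; rw [e1, e2]; exact S.a.2
  refine ⟨θ2, a1, ⟨by rw [a3, a4], a5⟩, ?_, S.k, ?_⟩
  · rw [GF hV hV' h0 hπ hr (by rw [a4, ← hst, S.g]) a5 hn, hc, S.c]
  · intro s h1 h2
    rw [a6 s h1 h2, ← hst, S.k α h0.le le_rfl]

lemma K_eq (hα : 0 < Real.sin α) (θ t : ℝ) :
    K V α θ t = cc V α θ + uu (2 * t) * (G V α θ - cc V α θ) := by
  rw [G_eq V hα, K, mul_add, uu_add]; ring

lemma caseII (hV : Good V) (hV' : Good V') (h0 : 0 < α) (hπ : α < π)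
    (hr : Set.range (G V α) = Set.range (G V' α)) (hne : ¬ ∀ θ, hh V θ = hh V' θ) {θ0 : ℝ}
    (hA : AtE V α θ0) : ∃ c r, Set.range (G V α) = Metric.sphere c r := by
  have hα := Real.sin_pos_of_pos_of_lt_pi h0 hπ
  set c := cc V α θ0 with hc
  set z := G V α θ0 - c with hz
  have hz0 : z ≠ 0 := by
    rw [hz, G_eq V hα, hc, add_sub_cancel_left]
    exact mul_ne_zero ((rho_ne hα).2 hA.2) (uu_ne _)
  have key : ∀ n : ℕ, ∃ θn, θ0 + n * α ≤ θn ∧ AtE V α θn ∧ cc V α θn = c ∧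
      G V α θn = c + uu (2 * (n * α)) * z ∧ (∀ s, θ0 ≤ s → s ≤ θn → ‖G V α s - c‖ = ‖z‖) ∧
      ∀ φ, 0 ≤ φ → φ ≤ n * α → c + uu (2 * φ) * z ∈ Set.range (G V α) := by
    intro n
    induction n with
    | zero =>
      refine ⟨θ0, by simp, hA, rfl, by simp [uu_zero, hz], ?_, ?_⟩
      · intro s h1 h2
        rw [le_antisymm h2 h1]
      · intro φ h1 h2
        simp at h2
        rw [le_antisymm h2 h1]
        exact ⟨θ0, by simp [uu_zero, hz]⟩
    | succ n ih =>
      obtain ⟨θn, b1, b2, b3, b4, b5, b6⟩ := ih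
      obtain ⟨θ2, d1, d2, d3, d4, d5⟩ := stp2 hV hV' h0 hπ hr hne b2
      have hk : ∀ t, K V α θn t = c + uu (2 * (n * α + t)) * z := by
        intro t
        rw [K_eq hα, b3, b4, mul_add, uu_add]; ring
      push_cast
      refine ⟨θ2, by linarith, d2, d3.trans b3, ?_, ?_, ?_⟩
      · rw [d5 θ2 d1.le le_rfl, hk, add_mul, one_mul]
      · intro s h1 h2
        by_cases h3 : s ≤ θn
        · exact b5 s h1 h3
        push Not at h3
        have : ∃ t, G V α s = K V α θn t := by
          by_cases h4 : s ≤ θn + α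
          · exact ⟨s - θn, by rw [← d4 _ (by linarith) (by linarith), add_sub_cancel]⟩
          · exact ⟨α, d5 s (by linarith) h2⟩
        obtain ⟨t, ht⟩ := this
        rw [ht, hk, add_sub_cancel_left, norm_mul, uu_norm, one_mul]
      · intro φ h1 h2
        by_cases h3 : φ ≤ n * α
        · exact b6 φ h1 h3
        push Not at h3
        refine ⟨θn + (φ - n * α), ?_⟩
        rw [d4 _ (by linarith) (by linarith), hk, add_sub_cancel]
  obtain ⟨n, hn⟩ := exists_nat_gt (2 * π / α)
  rw [div_lt_iff₀ h0] at hn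
  obtain ⟨θn, b1, b2, b3, b4, b5, b6⟩ := key n
  refine ⟨c, ‖z‖, Set.Subset.antisymm ?_ ?_⟩
  · rintro _ ⟨θ, rfl⟩
    obtain ⟨s, ⟨h1, h2⟩, h3⟩ := exists_rep (θ - θ0)
    have e : uu (θ0 + s) = uu θ := by
      have := uu_shift h3 θ0
      rwa [sub_add_cancel, add_comm] at this
    rw [← G_congr V α e, mem_sphere_iff_norm]
    exact b5 _ (by linarith) (by linarith)
  · intro y hy
    rw [mem_sphere_iff_norm] at hy
    set w := (y - c) / z with hw
    have hwn : ‖w‖ = 1 := by rw [hw, norm_div, hy, div_self (norm_ne_zero_iff.2 hz0)]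
    obtain ⟨s, ⟨h1, h2⟩, h3⟩ := exists_rep w.arg
    have h4 : uu s = w := by
      have := Complex.norm_mul_exp_arg_mul_I w
      rw [hwn] at this
      simp only [Complex.ofReal_one, one_mul] at this
      rw [h3]; exact this
    have := b6 (s / 2) (by linarith) (by linarith)
    rw [mul_div_cancel₀ s two_ne_zero, h4, hw, div_mul_cancel₀ _ hz0, add_sub_cancel] at this
    exact this

end pair
end Cl

namespace Cl
section pair
variable {V V' : Finset ℂ} {α : ℝ}

lemma uu_per (t : ℝ) : uu (t + 2 * π) = uu t := by
  rw [uu_eq, uu_eq, Real.cos_add_two_pi, Real.sin_add_two_pi]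

lemma int_shift {f : ℝ → ℝ} (hf : ∀ t, f (t + 2 * π) = f t) (d : ℝ) :
    ∫ t in (0)..(2 * π), f (t + d) = ∫ t in (0)..(2 * π), f t := by
  have hp : Function.Periodic f (2 * π) := hf
  rw [intervalIntegral.integral_comp_add_right, zero_add, add_comm, hp.intervalIntegral_add_eq d 0,
    zero_add]

lemma hh_per (V : Finset ℂ) (t : ℝ) : hh V (t + 2 * π) = hh V t := hh_congr V (uu_per t)

lemma int_pos (hV : Good V) : 0 < ∫ t in (0)..(2 * π), hh V t := by
  have hc := hh_cont hV.ne
  have hw : ∀ t, 0 < hh V t + hh V (t + π) := by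
    intro t
    obtain ⟨v, hv, w, hw, hvw⟩ := hV t
    have hn : ∀ v, dot v (t + π) = - dot v t := by
      intro v
      rw [dot_add]; simp
    have h1 := le_hh hv t
    have h2 := le_hh hv (t + π)
    have h3 := le_hh hw t
    have h4 := le_hh hw (t + π)
    rw [hn] at h2 h4
    rcases lt_or_gt_of_ne hvw with h | h <;> linarith
  have h1 := intervalIntegral.intervalIntegral_pos_of_pos
    (f := fun t => hh V t + hh V (t + π)) (a := 0) (b := 2 * π)
    (by apply Continuous.intervalIntegrable; fun_prop) hw Real.two_pi_pos
  rw [intervalIntegral.integral_add (by apply Continuous.intervalIntegrable; fun_prop)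
    (by apply Continuous.intervalIntegrable; fun_prop), int_shift (hh_per V)] at h1
  linarith

def bb (V : Finset ℂ) (α t : ℝ) : ℝ := (hh V (t + α) - hh V t * Real.cos α) / Real.sin α

lemma bb_int (hV : Good V) : ∫ t in (0)..(2 * π), bb V α t =
    ((1 - Real.cos α) / Real.sin α) * ∫ t in (0)..(2 * π), hh V t := by
  have hc := hh_cont hV.ne
  unfold bb
  rw [intervalIntegral.integral_div, intervalIntegral.integral_sub
    (by apply Continuous.intervalIntegrable; fun_prop)
    (by apply Continuous.intervalIntegrable; fun_prop), intervalIntegral.integral_mul_const,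
    int_shift (hh_per V)]
  ring

lemma caseI (hV : Good V) (hV' : Good V') (h0 : 0 < α) (hπ : α < π)
    (hr : Set.range (G V α) = Set.range (G V' α)) (n : ∀ t, ND V α t) (n' : ∀ t, ND V' α t)
    (θ : ℝ) : hh V θ = hh V' θ := by
  have hα := Real.sin_pos_of_pos_of_lt_pi h0 hπ
  obtain ⟨δ, hδ, -, -⟩ := germ hV.ne hV'.ne hα hr.subset (n 0)
  have hm : ∀ s, 0 ≤ s → s ≤ 2 * π → G V α s = G V' α (s + δ) := by
    have hc' := G_cont hV'.ne α
    refine march (G_cont hV.ne α) (g := fun s => G V' α (s + δ)) (by fun_prop) (by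
      simp only [zero_add]; exact hδ.symm) ?_
    intro m hm0 hm1 hs
    obtain ⟨τ, hτ, h⟩ := GFr hV hV' h0 hπ hr (hs m hm0 le_rfl) (n _) (n' _)
    refine ⟨τ, hτ, fun t a b => ?_⟩
    rw [h t a b, add_right_comm]
  have hall : ∀ t, G V α t = G V' α (t + δ) := by
    intro t
    obtain ⟨s, ⟨h1, h2⟩, h3⟩ := exists_rep t
    rw [← G_congr V α h3, ← G_congr V' α (uu_shift h3 δ), hm s h1 h2]
  have hrel : ∀ t, hh V t = Real.cos δ * hh V' (t + δ) - Real.sin δ * bb V' α (t + δ) ∧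
      bb V α t = Real.sin δ * hh V' (t + δ) + Real.cos δ * bb V' α (t + δ) := by
    intro t
    have h1 : (hh V t + bb V α t * Complex.I) * uu t =
        (hh V' (t + δ) + bb V' α (t + δ) * Complex.I) * uu (t + δ) := hall t
    rw [uu_add] at h1
    have h2 : (hh V t + bb V α t * Complex.I) =
        (hh V' (t + δ) + bb V' α (t + δ) * Complex.I) * uu δ := by
      apply mul_right_cancel₀ (uu_ne t); linear_combination h1
    have h3 := congrArg Complex.re h2
    have h4 := congrArg Complex.im h2
    simp [uu_re, uu_im] at h3 h4
    constructor <;> linarith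
  have hc := hh_cont hV.ne
  have hc' := hh_cont hV'.ne
  have hcb : Continuous (bb V' α) := by unfold bb; fun_prop
  have hbp : ∀ t, bb V' α (t + 2 * π) = bb V' α t := by
    intro t; unfold bb; rw [add_right_comm, hh_per, hh_per]
  have i1 : ∫ t in (0)..(2 * π), hh V t = Real.cos δ * (∫ t in (0)..(2 * π), hh V' t) -
      Real.sin δ * ∫ t in (0)..(2 * π), bb V' α t := by
    rw [← int_shift (hh_per V') δ, ← int_shift hbp δ, ← intervalIntegral.integral_const_mul,
      ← intervalIntegral.integral_const_mul, ← intervalIntegral.integral_sub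
      (by apply Continuous.intervalIntegrable; fun_prop)
      (by apply Continuous.intervalIntegrable; fun_prop)]
    exact intervalIntegral.integral_congr fun t _ => (hrel t).1
  have i2 : ∫ t in (0)..(2 * π), bb V α t = Real.sin δ * (∫ t in (0)..(2 * π), hh V' t) +
      Real.cos δ * ∫ t in (0)..(2 * π), bb V' α t := by
    rw [← int_shift (hh_per V') δ, ← int_shift hbp δ, ← intervalIntegral.integral_const_mul,
      ← intervalIntegral.integral_const_mul, ← intervalIntegral.integral_add
      (by apply Continuous.intervalIntegrable; fun_prop)
      (by apply Continuous.intervalIntegrable; fun_prop)]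
    exact intervalIntegral.integral_congr fun t _ => (hrel t).2
  rw [bb_int hV'] at i1 i2
  rw [bb_int hV] at i2
  have p1 := int_pos hV
  have p2 := int_pos hV'
  generalize (∫ t in (0)..(2 * π), hh V t) = H at *
  generalize (∫ t in (0)..(2 * π), hh V' t) = H' at *
  generalize (1 - Real.cos α) / Real.sin α = k at *
  have e1 : (Real.sin δ * H') * (1 + k ^ 2) = 0 := by linear_combination k * i1 - i2
  have e2 : Real.sin δ = 0 := by
    have : (1 + k ^ 2) ≠ 0 := by positivity
    have := (mul_eq_zero.1 e1).resolve_right this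
    exact (mul_eq_zero.1 this).resolve_right p2.ne'
  rw [e2] at i1
  have e3 : Real.cos δ = 1 := by
    rcases Real.sin_eq_zero_iff_cos_eq.1 e2 with h | h
    · exact h
    · rw [h] at i1; linarith
  have e4 : uu δ = 1 := by rw [uu_eq, e2, e3]; rfl
  have e5 : uu (θ + δ) = uu θ := by rw [uu_add, e4, mul_one]
  rw [← G_dot V α, ← G_dot V' α, hall, G_congr V' α e5]

lemma main_C (hV : Good V) (hV' : Good V') (h0 : 0 < α) (hπ : α < π)
    (hr : Set.range (G V α) = Set.range (G V' α))
    (hs : ¬ ∃ c r, Set.range (G V α) = Metric.sphere c r) (θ : ℝ) : hh V θ = hh V' θ := by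
  by_cases n : ∀ t, ND V α t
  · by_cases n' : ∀ t, ND V' α t
    · exact caseI hV hV' h0 hπ hr n n' θ
    · push Not at n'
      obtain ⟨t, ht⟩ := n'
      by_contra hcon
      obtain ⟨a, -, -, a3, a4, a5, -⟩ := AE hV' h0 hπ ht
      apply hs
      rw [hr]
      exact caseII hV' hV h0 hπ hr.symm (fun h => hcon (h θ).symm) ⟨by rw [a3, a4], a5⟩
  · push Not at n
    obtain ⟨t, ht⟩ := n
    by_contra hcon
    obtain ⟨a, -, -, a3, a4, a5, -⟩ := AE hV h0 hπ ht
    exact hs (caseII hV hV' h0 hπ hr (fun h => hcon (h θ)) ⟨by rw [a3, a4], a5⟩)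

end pair
end Cl

namespace Cl

def Phi : Plane ≃ₗᵢ[ℝ] ℂ := Complex.orthonormalBasisOneI.repr.symm

def IsW (P : Set ℂ) (ω : ℝ) (x d₁ d₂ : ℂ) : Prop :=
  ‖d₁‖ = 1 ∧ ‖d₂‖ = 1 ∧ InnerProductGeometry.angle d₁ d₂ = ω ∧
  (∀ y ∈ P, ∃ s t : ℝ, 0 ≤ s ∧ 0 ≤ t ∧ y = x + s * d₁ + t * d₂) ∧
  (∃ y ∈ P, ∃ t : ℝ, 0 ≤ t ∧ y = x + t * d₁) ∧ (∃ y ∈ P, ∃ t : ℝ, 0 ≤ t ∧ y = x + t * d₂)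

lemma isW_iff (P : Set Plane) (ω : ℝ) (x d₁ d₂ : Plane) :
    IsMinWedge P ω x d₁ d₂ ↔ IsW (Phi '' P) ω (Phi x) (Phi d₁) (Phi d₂) := by
  unfold IsMinWedge IsW
  rw [Phi.norm_map, Phi.norm_map]
  have ha : InnerProductGeometry.angle (Phi d₁) (Phi d₂) = InnerProductGeometry.angle d₁ d₂ :=
    Phi.toLinearIsometry.angle_map d₁ d₂
  rw [ha]
  have e : ∀ (t : ℝ) (d : Plane), (t : ℂ) * Phi d = Phi (t • d) := by
    intro t d; rw [map_smul, Complex.real_smul]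
  have hr : ∀ d : Plane, (P ∩ ray x d).Nonempty ↔
      ∃ y ∈ Phi '' P, ∃ t : ℝ, 0 ≤ t ∧ y = Phi x + t * Phi d := by
    intro d
    constructor
    · rintro ⟨y, hy, t, ht, rfl⟩
      exact ⟨_, ⟨_, hy, rfl⟩, t, ht, by rw [e, map_add]⟩
    · rintro ⟨_, ⟨y, hy, rfl⟩, t, ht, h⟩
      rw [e, ← map_add] at h
      exact ⟨y, hy, t, ht, Phi.injective h⟩
  rw [hr, hr]
  have hw : P ⊆ wedgeSet x d₁ d₂ ↔ ∀ y ∈ Phi '' P, ∃ s t : ℝ, 0 ≤ s ∧ 0 ≤ t ∧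
      y = Phi x + s * Phi d₁ + t * Phi d₂ := by
    constructor
    · rintro h _ ⟨y, hy, rfl⟩
      obtain ⟨s, t, hs, ht, h⟩ := h hy
      exact ⟨s, t, hs, ht, by rw [e, e, h, map_add, map_add]⟩
    · intro h y hy
      obtain ⟨s, t, hs, ht, h⟩ := h _ ⟨y, hy, rfl⟩
      refine ⟨s, t, hs, ht, Phi.injective ?_⟩
      rw [h, e, e, map_add, map_add]
  rw [hw]

lemma dot_hull {W : Finset ℂ} {y : ℂ} (hy : y ∈ convexHull ℝ (W : Set ℂ)) (θ : ℝ) :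
    dot y θ ≤ hh W θ := by
  have hc : Convex ℝ {y : ℂ | dot y θ ≤ hh W θ} := by
    intro a ha b hb s t hs ht hst
    simp only [Set.mem_ofPred_eq] at *
    have : dot (s • a + t • b) θ = s * dot a θ + t * dot b θ := by
      simp [dot]; ring
    rw [this]
    have h1 := mul_le_mul_of_nonneg_left ha hs
    have h2 := mul_le_mul_of_nonneg_left hb ht
    have : s * hh W θ + t * hh W θ = hh W θ := by rw [← add_mul, hst, one_mul]
    linarith
  exact convexHull_min (fun w hw => le_hh hw θ) hc hy

lemma dot_nI (b φ ψ : ℝ) : dot (b * (-Complex.I * uu φ)) ψ = -(b * Real.sin (ψ - φ)) := by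
  have := dot_I (-b) φ ψ
  rw [show (b : ℂ) * (-Complex.I * uu φ) = (-b : ℝ) * Complex.I * uu φ by push_cast; ring, this]
  ring
lemma dot_pI (b φ ψ : ℝ) : dot (b * (Complex.I * uu φ)) ψ = b * Real.sin (ψ - φ) := by
  rw [← mul_assoc, dot_I]

lemma isW_G {W : Finset ℂ} {ω θ : ℝ} {x : ℂ} (hW : W.Nonempty) (hα : 0 < Real.sin (π - ω))
    (h1 : ∀ y ∈ convexHull ℝ (W : Set ℂ), ∃ s t : ℝ, 0 ≤ s ∧ 0 ≤ t ∧
      y = x + s * (-Complex.I * uu θ) + t * (Complex.I * uu (θ + (π - ω))))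
    (h2 : ∃ y ∈ convexHull ℝ (W : Set ℂ), ∃ t : ℝ, 0 ≤ t ∧ y = x + t * (-Complex.I * uu θ))
    (h3 : ∃ y ∈ convexHull ℝ (W : Set ℂ), ∃ t : ℝ, 0 ≤ t ∧
      y = x + t * (Complex.I * uu (θ + (π - ω)))) :
    G W (π - ω) θ = x := by
  generalize π - ω = α at *
  apply G_of hα
  · apply le_antisymm
    · obtain ⟨y, hy, t, ht, rfl⟩ := h2
      have := dot_hull hy θ
      rwa [dot_addv, dot_nI, sub_self, Real.sin_zero, mul_zero, neg_zero, add_zero] at this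
    · obtain ⟨s, t, hs, ht, h⟩ := h1 _ (subset_convexHull ℝ _ (pp_mem hW θ))
      unfold hh
      rw [h, dot_addv, dot_addv, dot_nI, dot_pI, sub_self, Real.sin_zero,
        show θ - (θ + α) = -α by ring, Real.sin_neg]
      have := mul_nonneg ht hα.le
      linarith
  · apply le_antisymm
    · obtain ⟨y, hy, t, ht, rfl⟩ := h3
      have := dot_hull hy (θ + α)
      rwa [dot_addv, dot_pI, sub_self, Real.sin_zero, mul_zero, add_zero] at this
    · obtain ⟨s, t, hs, ht, h⟩ := h1 _ (subset_convexHull ℝ _ (pp_mem hW (θ + α)))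
      unfold hh
      rw [h, dot_addv, dot_addv, dot_nI, dot_pI, sub_self, Real.sin_zero,
        show θ + α - θ = α by ring]
      have := mul_nonneg hs hα.le
      linarith

lemma G_isW {W : Finset ℂ} {ω : ℝ} (hω0 : 0 < ω) (hωπ : ω < π) (hW : W.Nonempty) (θ : ℝ) :
    IsW (convexHull ℝ (W : Set ℂ)) ω (G W (π - ω) θ) (-Complex.I * uu θ)
      (Complex.I * uu (θ + (π - ω))) := by
  have hα : 0 < Real.sin (π - ω) := by
    rw [Real.sin_pi_sub]; exact Real.sin_pos_of_pos_of_lt_pi hω0 hωπ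
  have n1 : ‖-Complex.I * uu θ‖ = 1 := by rw [norm_mul, uu_norm]; simp
  have n2 : ‖Complex.I * uu (θ + (π - ω))‖ = 1 := by rw [norm_mul, uu_norm]; simp
  refine ⟨n1, n2, ?_, ?_, ?_, ?_⟩
  · rw [InnerProductGeometry.angle, n1, n2, mul_one, div_one]
    have : inner ℝ (-Complex.I * uu θ) (Complex.I * uu (θ + (π - ω))) = Real.cos ω := by
      rw [Complex.inner, uu_add, map_mul, conj_uu]
      have : starRingEnd ℂ (-Complex.I) = Complex.I := by simp
      rw [this, show Complex.I * (uu θ * uu (π - ω)) * (Complex.I * uu (-θ)) = -uu (π - ω) by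
        linear_combination (uu (π - ω) * Complex.I ^ 2) * uu_neg θ + uu (π - ω) * Complex.I_sq]
      rw [Complex.neg_re, uu_re, Real.cos_pi_sub, neg_neg]
    rw [this, Real.arccos_cos hω0.le hωπ.le]
  · intro y hy
    generalize π - ω = α at *
    have y1 := dot_hull hy θ
    have y2 := dot_hull hy (θ + α)
    refine ⟨(hh W (θ + α) - dot y (θ + α)) / Real.sin α, (hh W θ - dot y θ) / Real.sin α,
      div_nonneg (by linarith) hα.le, div_nonneg (by linarith) hα.le, ?_⟩
    apply ext2 hα (θ := θ)
    · rw [dot_addv, dot_addv, dot_nI, dot_pI, sub_self, Real.sin_zero, G_dot,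
        show θ - (θ + α) = -α by ring, Real.sin_neg]
      field_simp; ring
    · rw [dot_addv, dot_addv, dot_nI, dot_pI, sub_self, Real.sin_zero, G_dot2 W hα,
        show θ + α - θ = α by ring]
      field_simp; ring
  · obtain ⟨a, ha, h⟩ := pa hW hα θ
    exact ⟨_, subset_convexHull ℝ _ (pp_mem hW θ), a, ha, by rw [h]; ring⟩
  · obtain ⟨a, ha, h⟩ := qb hW hα θ
    exact ⟨_, subset_convexHull ℝ _ (pp_mem hW _), a, ha, by rw [h]; ring⟩

lemma dirs {ω : ℝ} {d₁ d₂ : ℂ} (h1 : ‖d₁‖ = 1) (h : d₂ = uu (-ω) * d₁) :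
    ∃ θ, d₁ = -Complex.I * uu θ ∧ d₂ = Complex.I * uu (θ + (π - ω)) := by
  have e : d₁ = uu d₁.arg := by
    have := Complex.norm_mul_exp_arg_mul_I d₁
    rw [h1] at this
    simp only [Complex.ofReal_one, one_mul] at this
    exact this.symm
  have hp : uu (π / 2) = Complex.I := by rw [uu_eq]; simp; rfl
  have hpi : uu π = -1 := by rw [uu_eq]; apply Complex.ext <;> simp
  refine ⟨d₁.arg + π / 2, ?_, ?_⟩
  · rw [uu_add, ← e, hp]; linear_combination d₁ * Complex.I_sq
  · rw [h, sub_eq_add_neg, uu_add, uu_add, uu_add, ← e, hp, hpi]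
    linear_combination (d₁ * uu (-ω)) * Complex.I_sq

lemma IsW.swap {P : Set ℂ} {ω : ℝ} {x d₁ d₂ : ℂ} (h : IsW P ω x d₁ d₂) : IsW P ω x d₂ d₁ := by
  obtain ⟨a, b, c, d, e, f⟩ := h
  refine ⟨b, a, by rw [InnerProductGeometry.angle_comm]; exact c, ?_, f, e⟩
  intro y hy
  obtain ⟨s, t, hs, ht, h⟩ := d y hy
  exact ⟨t, s, ht, hs, by rw [h]; ring⟩

lemma isW_range {W : Finset ℂ} {ω : ℝ} (hω0 : 0 < ω) (hωπ : ω < π) (hW : W.Nonempty) {x d₁ d₂ : ℂ}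
    (h : IsW (convexHull ℝ (W : Set ℂ)) ω x d₁ d₂) : x ∈ Set.range (G W (π - ω)) := by
  have hα : 0 < Real.sin (π - ω) := by
    rw [Real.sin_pi_sub]; exact Real.sin_pos_of_pos_of_lt_pi hω0 hωπ
  have key : ∀ d₁ d₂, IsW (convexHull ℝ (W : Set ℂ)) ω x d₁ d₂ → d₂ = uu (-ω) * d₁ →
      x ∈ Set.range (G W (π - ω)) := by
    intro d₁ d₂ h e
    obtain ⟨θ, rfl, rfl⟩ := dirs h.1 e
    exact ⟨θ, isW_G hW hα h.2.2.2.1 h.2.2.2.2.1 h.2.2.2.2.2⟩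
  have h1 := h.1
  have h2 := h.2.1
  have ha : Real.cos ω = inner ℝ d₁ d₂ := by
    rw [← h.2.2.1, InnerProductGeometry.cos_angle, h1, h2, mul_one, div_one]
  rw [Complex.inner, mul_comm] at ha
  have hcc : starRingEnd ℂ d₁ * d₁ = 1 := by
    rw [mul_comm, Complex.mul_conj, Complex.normSq_eq_norm_sq, h1]; simp
  have hn : ‖starRingEnd ℂ d₁ * d₂‖ = 1 := by rw [norm_mul, Complex.norm_conj, h1, h2, mul_one]
  have hd : d₂ = (starRingEnd ℂ d₁ * d₂) * d₁ := by linear_combination (-d₂) * hcc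
  generalize starRingEnd ℂ d₁ * d₂ = w at *
  have hsq : w.im ^ 2 = Real.sin ω ^ 2 := by
    have := Complex.normSq_eq_norm_sq w
    rw [hn, Complex.normSq_apply, ← ha] at this
    nlinarith [Real.sin_sq_add_cos_sq ω]
  rcases sq_eq_sq_iff_eq_or_eq_neg.1 hsq with hi | hi
  · have hw : w = uu ω := by rw [uu_eq]; exact Complex.ext ha.symm hi
    apply key d₂ d₁ h.swap
    rw [hd, hw, ← mul_assoc, uu_neg, one_mul]
  · have hw : w = uu (-ω) := by
      rw [uu_eq, Real.cos_neg, Real.sin_neg]; exact Complex.ext ha.symm hi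
    apply key d₁ d₂ h
    rw [← hw]; exact hd

lemma hull_image (V : Finset Plane) :
    Phi '' convexHull ℝ (V : Set Plane) = convexHull ℝ ((V.image Phi : Finset ℂ) : Set ℂ) := by
  rw [Finset.coe_image]
  exact Phi.toLinearEquiv.toLinearMap.image_convexHull _

lemma cloud (V : Finset Plane) (hV : V.Nonempty) {ω : ℝ} (hω0 : 0 < ω) (hωπ : ω < π) :
    Phi '' omegaCloud (convexHull ℝ (V : Set Plane)) ω = Set.range (G (V.image Phi) (π - ω)) := by
  have hW : (V.image Phi).Nonempty := hV.image _
  ext x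
  constructor
  · rintro ⟨x, ⟨d₁, d₂, h⟩, rfl⟩
    rw [isW_iff, hull_image] at h
    exact isW_range hω0 hωπ hW h
  · rintro ⟨θ, rfl⟩
    refine ⟨Phi.symm (G (V.image Phi) (π - ω) θ), ⟨Phi.symm (-Complex.I * uu θ),
      Phi.symm (Complex.I * uu (θ + (π - ω))), ?_⟩, by simp⟩
    rw [isW_iff, hull_image]
    simp only [LinearIsometryEquiv.apply_symm_apply]
    exact G_isW hω0 hωπ hW θ

lemma hull_iff {W : Finset ℂ} (hW : W.Nonempty) (y : ℂ) :
    y ∈ convexHull ℝ (W : Set ℂ) ↔ ∀ θ, dot y θ ≤ hh W θ := by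
  refine ⟨fun h θ => dot_hull h θ, fun h => ?_⟩
  by_contra hy
  obtain ⟨f, u, h1, h2⟩ := geometric_hahn_banach_closed_point (convex_convexHull ℝ (W : Set ℂ))
    (W.finite_toSet.isClosed_convexHull ℝ) hy
  have hf : ∀ z : ℂ, f z = ‖(⟨f 1, f Complex.I⟩ : ℂ)‖ * dot z (Complex.arg ⟨f 1, f Complex.I⟩) := by
    intro z
    have e1 := Complex.norm_mul_cos_arg (⟨f 1, f Complex.I⟩ : ℂ)
    have e2 := Complex.norm_mul_sin_arg (⟨f 1, f Complex.I⟩ : ℂ)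
    have : f z = z.re * f 1 + z.im * f Complex.I := by
      conv_lhs => rw [show z = z.re • (1 : ℂ) + z.im • Complex.I by
        apply Complex.ext <;> simp]
      rw [map_add, map_smul, map_smul]; rfl
    rw [this]
    simp only at e1 e2
    unfold dot
    linear_combination (-z.re) * e1 + (-z.im) * e2
  have h3 := h1 _ (subset_convexHull ℝ _ (pp_mem hW (Complex.arg ⟨f 1, f Complex.I⟩)))
  have h4 := mul_le_mul_of_nonneg_left (h (Complex.arg ⟨f 1, f Complex.I⟩))
    (norm_nonneg (⟨f 1, f Complex.I⟩ : ℂ))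
  rw [hf] at h2 h3
  change _ * hh W _ < u at h3
  linarith

lemma good (V : Finset Plane) (hV : IsConvexPolygon V) : Good (V.image Phi) := by
  obtain ⟨hc, hV⟩ := hV
  intro θ
  by_contra hcon
  push Not at hcon
  obtain ⟨a, ha, b, hb, c, hc, hab, hac, hbc⟩ := Finset.two_lt_card.1 hc
  have hd : ∀ v ∈ V, ∃ r : ℝ, v = r • Phi.symm (Complex.I * uu θ) +ᵥ a := by
    intro v hv
    have := perp (hcon _ (Finset.mem_image_of_mem _ hv) _ (Finset.mem_image_of_mem _ ha))
    refine ⟨dt (Phi v) θ - dt (Phi a) θ, Phi.injective ?_⟩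
    rw [vadd_eq_add, map_add, map_smul, LinearIsometryEquiv.apply_symm_apply, Complex.real_smul]
    linear_combination this
  have hcol : Collinear ℝ ({a, b, c} : Set Plane) := by
    rw [collinear_iff_of_mem (p₀ := a) (by simp)]
    refine ⟨_, fun p hp => hd p ?_⟩
    rcases hp with rfl | rfl | rfl <;> assumption
  have key : ∀ x y z, x ∈ V → y ∈ V → z ∈ V → x ≠ y → z ≠ y → ¬ Wbtw ℝ x y z := by
    intro x y z hx hy hz h1 h2 h
    apply hV y hy
    refine segment_subset_convexHull (x := x) (y := z) ?_ ?_ ?_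
    · simp [h1, hx]
    · simp [h2, hz]
    · exact h.mem_segment
  rcases hcol.wbtw_or_wbtw_or_wbtw with h | h | h
  · exact key _ _ _ ha hb hc hab hbc.symm h
  · exact key _ _ _ hb hc ha hbc hac h
  · exact key _ _ _ hc ha hb hac.symm hab.symm h

lemma final (V V' : Finset Plane) (hV : IsConvexPolygon V) (hV' : IsConvexPolygon V')
    (ω : ℝ) (hω : ω ∈ Set.Ioo 0 π)
    (heq : omegaCloud (convexHull ℝ (V : Set Plane)) ω =
      omegaCloud (convexHull ℝ (V' : Set Plane)) ω)
    (hnotcircle : ¬∃ (c : Plane) (r : ℝ),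
      omegaCloud (convexHull ℝ (V : Set Plane)) ω = Metric.sphere c r) :
    convexHull ℝ (V : Set Plane) = convexHull ℝ (V' : Set Plane) := by
  have g := good V hV
  have g' := good V' hV'
  have nV : V.Nonempty := Finset.image_nonempty.1 g.ne
  have nV' : V'.Nonempty := Finset.image_nonempty.1 g'.ne
  have c1 := cloud V nV hω.1 hω.2
  have c2 := cloud V' nV' hω.1 hω.2
  have hh' := main_C g g' (α := π - ω) (by linarith [hω.2]) (by linarith [hω.1])
    (by rw [← c1, ← c2, heq]) (by
      rintro ⟨c, r, h⟩
      apply hnotcircle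
      refine ⟨Phi.symm c, r, ?_⟩
      rw [← c1] at h
      apply Phi.injective.image_injective
      rw [h, Phi.image_sphere, Phi.apply_symm_apply])
  apply Phi.injective.image_injective
  rw [hull_image, hull_image]
  ext y
  rw [hull_iff g.ne, hull_iff g'.ne]
  simp only [hh']

end Cl

/-- For a fixed angle `ω` and a maximal `ω`-cloud consisting of at least two arcs (i.e. not a
full circle), the convex polygon is uniquely determined: two convex polygons with the same
(maximal) `ω`-cloud coincide. -/
theorem stmt_15 (V V' : Finset Plane) (hV : IsConvexPolygon V) (hV' : IsConvexPolygon V')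
    (ω : ℝ) (hω : ω ∈ Set.Ioo 0 π)
    (heq : omegaCloud (convexHull ℝ (V : Set Plane)) ω =
      omegaCloud (convexHull ℝ (V' : Set Plane)) ω)
    (hnotcircle : ¬∃ (c : Plane) (r : ℝ),
      omegaCloud (convexHull ℝ (V : Set Plane)) ω = Metric.sphere c r) :
    convexHull ℝ (V : Set Plane) = convexHull ℝ (V' : Set Plane) := by
  exact Cl.final V V' hV hV' ω hω heq hnotcircle

end
end

section
/- There exists a circular arc sequence Ω, two distinct angles ω, ω' ∈ (0, π), and two distinct convex polygons P, P' such that Ω is simultaneously the maximal ω-cloud of P and the maximal ω'-cloud of P'. Concretely: let P be the triangle ace with angles π/3 at c, 16π/45 at e, 14π/45 at a, and ω = 2π/3; its ω-cloud Ω consists of three arcs. Letting b, d, f be the midpoints of these arcs, the hexagon P' = abcdef has all interior angles less than ω' = 5π/6, and Ω is the maximal ω'-cloud of P'. -/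
open EuclideanGeometry Real Set
open scoped Classical

noncomputable section

def cr (u w : Plane) : ℝ := u 0 * w 1 - u 1 * w 0
def dt (u w : Plane) : ℝ := u 0 * w 0 + u 1 * w 1

lemma inner_dt (u w : Plane) : inner ℝ u w = dt u w := by
  simp [PiLp.inner_apply, Fin.sum_univ_two, dt, mul_comm]

lemma normsq_dt (u : Plane) : ‖u‖ ^ 2 = dt u u := by
  rw [← inner_dt, real_inner_self_eq_norm_sq]

lemma lagr (u w : Plane) : cr u w ^ 2 + dt u w ^ 2 = dt u u * dt w w := by
  simp only [cr, dt]; ring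

lemma dt_angle (u w : Plane) :
    dt u w = ‖u‖ * ‖w‖ * cos (InnerProductGeometry.angle u w) := by
  rw [← inner_dt, ← InnerProductGeometry.cos_angle_mul_norm_mul_norm]; ring

lemma cr_angle (u w : Plane) (h : 0 ≤ cr u w) :
    cr u w = ‖u‖ * ‖w‖ * sin (InnerProductGeometry.angle u w) := by
  have h1 := lagr u w
  have h2 := dt_angle u w
  have h3 := sin_sq_add_cos_sq (InnerProductGeometry.angle u w)
  have h4 := InnerProductGeometry.sin_angle_nonneg u w
  rw [← normsq_dt, ← normsq_dt, h2] at h1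
  have h5 : cr u w ^ 2 = (‖u‖ * ‖w‖ * sin (InnerProductGeometry.angle u w)) ^ 2 := by
    linear_combination h1 - (‖u‖ * ‖w‖)^2 * h3
  exact (pow_left_inj₀ h (by positivity) two_ne_zero).1 h5

lemma cr_swap (u w : Plane) : cr w u = - cr u w := by simp only [cr]; ring
lemma dt_swap (u w : Plane) : dt w u = dt u w := by simp only [dt]; ring

lemma zero_of_dt (u : Plane) (h : dt u u = 0) : u = 0 := by
  rw [← normsq_dt] at h
  simpa using h

/-- algebraic form of `angle < ω` -/
lemma Q_pos {u w : Plane} {ω : ℝ} (hω : ω < π) (hu : u ≠ 0) (hw : w ≠ 0)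
    (h : InnerProductGeometry.angle u w < ω) (hc : 0 ≤ cr u w) :
    0 < sin ω * dt u w - cos ω * cr u w := by
  have h0 := InnerProductGeometry.angle_nonneg u w
  rw [dt_angle, cr_angle u w hc]
  have : 0 < sin (ω - InnerProductGeometry.angle u w) :=
    sin_pos_of_pos_of_lt_pi (by linarith) (by linarith)
  rw [sin_sub] at this
  have hn : 0 < ‖u‖ * ‖w‖ := by positivity
  nlinarith [mul_pos hn this]

lemma angle_le_of {u w : Plane} (hu : u ≠ 0) (hw : w ≠ 0) (hc : 0 ≤ cr u w)
    (h : 0 ≤ cr u w + dt u w) : InnerProductGeometry.angle u w ≤ 3 * π / 4 := by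
  by_contra hlt
  push Not at hlt
  have h1 := InnerProductGeometry.angle_le_pi u w
  rw [dt_angle, cr_angle u w hc] at h
  set θ := InnerProductGeometry.angle u w
  have hn : 0 < ‖u‖ * ‖w‖ := by positivity
  have h2 : 0 ≤ sin θ + cos θ := by
    by_contra h3
    push Not at h3
    nlinarith [mul_pos_of_neg_of_neg h3 (neg_lt_zero.2 hn)]
  have h4 : 0 < sin (θ + π / 4 - π) :=
    sin_pos_of_pos_of_lt_pi (by linarith) (by linarith [pi_pos])
  rw [sin_sub_pi, sin_add, cos_pi_div_four, sin_pi_div_four] at h4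
  have : 0 < √2 := by positivity
  nlinarith [mul_nonneg h2 this.le]

lemma angle_eq_of {u w : Plane} {A B θ : ℝ} (hA : 0 < A) (hB : 0 < B) (hu : dt u u = A ^ 2)
    (hw : dt w w = B ^ 2) (h0 : 0 ≤ θ) (h1 : θ ≤ π) (h : dt u w = A * B * cos θ) :
    InnerProductGeometry.angle u w = θ := by
  have hu' : ‖u‖ = A := by
    rw [← normsq_dt] at hu
    exact (pow_left_inj₀ (norm_nonneg _) hA.le two_ne_zero).1 hu
  have hw' : ‖w‖ = B := by
    rw [← normsq_dt] at hw
    exact (pow_left_inj₀ (norm_nonneg _) hB.le two_ne_zero).1 hw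
  rw [InnerProductGeometry.angle, inner_dt, h, hu', hw', mul_div_cancel_left₀ _ (by positivity),
    arccos_cos h0 h1]

lemma lin_cr (d : Plane) : IsLinearMap ℝ (cr d) := by
  constructor
  · intro x y; simp [cr]; ring
  · intro x y; simp [cr]; ring

lemma cr_add (d x y : Plane) : cr d (x + y) = cr d x + cr d y := by simp [cr]; ring
lemma cr_sub (d x y : Plane) : cr d (x - y) = cr d x - cr d y := by simp [cr]; ring

lemma hull_nonneg {V : Set Plane} {d x : Plane} (h : ∀ v ∈ V, 0 ≤ cr d (v - x)) :
    ∀ v ∈ convexHull ℝ V, 0 ≤ cr d (v - x) := by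
  have : convexHull ℝ V ⊆ {y | cr d x ≤ cr d y} := by
    apply convexHull_min _ (convex_halfSpace_ge (lin_cr d) _)
    intro v hv
    have := h v hv
    rw [cr_sub] at this
    simpa using this
  intro v hv
  have := this hv
  rw [cr_sub]
  simpa using this

lemma hull_pos {V : Set Plane} {d x : Plane} (h : ∀ v ∈ V, 0 < cr d (v - x)) :
    ∀ v ∈ convexHull ℝ V, 0 < cr d (v - x) := by
  have : convexHull ℝ V ⊆ {y | cr d x < cr d y} := by
    apply convexHull_min _ (convex_halfSpace_gt (lin_cr d) _)
    intro v hv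
    have := h v hv
    rw [cr_sub] at this
    simpa using this
  intro v hv
  have := this hv
  rw [cr_sub]
  simpa using this

lemma decomp {d₁ d₂ : Plane} (h : 0 < cr d₁ d₂) (z : Plane) :
    z = (cr z d₂ / cr d₁ d₂) • d₁ + (cr d₁ z / cr d₁ d₂) • d₂ := by
  have h' := h.ne'
  have key : cr d₁ d₂ • z = cr z d₂ • d₁ + cr d₁ z • d₂ := by
    ext i
    fin_cases i <;> simp [cr] <;> ring
  have e : z = (cr d₁ d₂)⁻¹ • (cr d₁ d₂ • z) := by rw [smul_smul, inv_mul_cancel₀ h', one_smul]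
  rw [key, smul_add, smul_smul, smul_smul] at e
  rw [div_eq_inv_mul, div_eq_inv_mul]
  exact e

lemma wedge_iff {x d₁ d₂ : Plane} (h : 0 < cr d₁ d₂) (y : Plane) :
    y ∈ wedgeSet x d₁ d₂ ↔ 0 ≤ cr d₁ (y - x) ∧ 0 ≤ cr (y - x) d₂ := by
  constructor
  · rintro ⟨s, t, hs, ht, rfl⟩
    have e1 : cr d₁ (x + s • d₁ + t • d₂ - x) = t * cr d₁ d₂ := by simp [cr]; ring
    have e2 : cr (x + s • d₁ + t • d₂ - x) d₂ = s * cr d₁ d₂ := by simp [cr]; ring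
    rw [e1, e2]
    constructor <;> positivity
  · rintro ⟨h1, h2⟩
    refine ⟨_, _, div_nonneg h2 h.le, div_nonneg h1 h.le, ?_⟩
    rw [add_assoc, ← decomp h (y - x)]
    abel

def NormWedge (V : Set Plane) (ω : ℝ) (x d₁ d₂ : Plane) : Prop :=
  dt d₁ d₁ = 1 ∧ dt d₂ d₂ = 1 ∧ cr d₁ d₂ = sin ω ∧ dt d₁ d₂ = cos ω ∧
  (∀ v ∈ V, 0 ≤ cr d₁ (v - x) ∧ 0 ≤ cr (v - x) d₂) ∧
  (∃ p ∈ V, cr d₁ (p - x) = 0) ∧ (∃ q ∈ V, cr (q - x) d₂ = 0)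

lemma min_swap {P : Set Plane} {ω : ℝ} {x d₁ d₂ : Plane} (h : IsMinWedge P ω x d₁ d₂) :
    IsMinWedge P ω x d₂ d₁ := by
  obtain ⟨h1, h2, h3, h4, h5, h6⟩ := h
  refine ⟨h2, h1, by rw [InnerProductGeometry.angle_comm, h3], ?_, h6, h5⟩
  intro y hy
  obtain ⟨s, t, hs, ht, rfl⟩ := h4 hy
  exact ⟨t, s, ht, hs, by abel⟩

lemma norm_one_iff (u : Plane) : ‖u‖ = 1 ↔ dt u u = 1 := by
  rw [← normsq_dt]
  constructor
  · intro h; rw [h]; norm_num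
  · intro h
    exact (pow_left_inj₀ (norm_nonneg _) zero_le_one two_ne_zero).1 (by rw [h]; norm_num)

lemma norm_of_min {V : Set Plane} {ω : ℝ} (h0 : 0 < ω) (hpi : ω < π) {x d₁ d₂ : Plane}
    (h : IsMinWedge (convexHull ℝ V) ω x d₁ d₂) (hc : 0 ≤ cr d₁ d₂) : NormWedge V ω x d₁ d₂ := by
  obtain ⟨h1, h2, h3, h4, ⟨p, hp, s, hs, hps⟩, ⟨q, hq, t, ht, hqt⟩⟩ := h
  have hs0 := sin_pos_of_pos_of_lt_pi h0 hpi
  have e1 : cr d₁ d₂ = sin ω := by rw [cr_angle _ _ hc, h1, h2, h3]; ring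
  have e2 : dt d₁ d₂ = cos ω := by rw [dt_angle, h1, h2, h3]; ring
  have hw : ∀ v ∈ V, 0 ≤ cr d₁ (v - x) ∧ 0 ≤ cr (v - x) d₂ := fun v hv =>
    (wedge_iff (by rw [e1]; exact hs0) v).1 (h4 (subset_convexHull ℝ V hv))
  refine ⟨(norm_one_iff _).1 h1, (norm_one_iff _).1 h2, e1, e2, hw, ?_, ?_⟩
  · by_contra hne
    push Not at hne
    have := hull_pos (V := V) (d := d₁) (x := x)
      (fun v hv => lt_of_le_of_ne (hw v hv).1 (hne v hv).symm) p hp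
    have e : cr d₁ (p - x) = 0 := by rw [hps]; simp [cr]; ring
    linarith
  · by_contra hne
    push Not at hne
    have sw : ∀ z, cr (-d₂) z = cr z d₂ := by intro z; simp [cr]; ring
    have := hull_pos (V := V) (d := -d₂) (x := x)
      (fun v hv => by rw [sw]; exact lt_of_le_of_ne (hw v hv).2 (hne v hv).symm) q hq
    have e : cr (-d₂) (q - x) = 0 := by rw [hqt]; simp [cr]; ring
    linarith

lemma min_of_norm {V : Set Plane} {ω : ℝ} (h0 : 0 < ω) (hpi : ω < π) {x d₁ d₂ : Plane}
    (h : NormWedge V ω x d₁ d₂) : IsMinWedge (convexHull ℝ V) ω x d₁ d₂ := by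
  obtain ⟨h1, h2, h3, h4, h5, ⟨p, hp, hp0⟩, ⟨q, hq, hq0⟩⟩ := h
  have hs0 := sin_pos_of_pos_of_lt_pi h0 hpi
  have hc : 0 < cr d₁ d₂ := by rw [h3]; exact hs0
  have sw : ∀ z, cr (-d₂) z = cr z d₂ := by intro z; simp [cr]; ring
  refine ⟨(norm_one_iff _).2 h1, (norm_one_iff _).2 h2, ?_, ?_, ?_, ?_⟩
  · apply angle_eq_of one_pos one_pos (by simpa using h1) (by simpa using h2) h0.le hpi.le
    rw [h4]; ring
  · intro y hy
    rw [wedge_iff hc]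
    refine ⟨hull_nonneg (fun v hv => (h5 v hv).1) y hy, ?_⟩
    rw [← sw]
    exact hull_nonneg (fun v hv => by rw [sw]; exact (h5 v hv).2) y hy
  · refine ⟨p, subset_convexHull ℝ V hp, _, div_nonneg (h5 p hp).2 hc.le, ?_⟩
    have := decomp hc (p - x)
    rw [hp0, zero_div, zero_smul, add_zero] at this
    rw [← this]; abel
  · refine ⟨q, subset_convexHull ℝ V hq, _, div_nonneg (h5 q hq).1 hc.le, ?_⟩
    have := decomp hc (q - x)
    rw [hq0, zero_div, zero_smul, zero_add] at this
    rw [← this]; abel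

lemma cloud_norm {V : Set Plane} {ω : ℝ} (h0 : 0 < ω) (hpi : ω < π) (x : Plane) :
    x ∈ omegaCloud (convexHull ℝ V) ω ↔ ∃ d₁ d₂, NormWedge V ω x d₁ d₂ := by
  constructor
  · rintro ⟨d₁, d₂, h⟩
    rcases le_total 0 (cr d₁ d₂) with hc | hc
    · exact ⟨_, _, norm_of_min h0 hpi h hc⟩
    · exact ⟨_, _, norm_of_min h0 hpi (min_swap h) (by rw [cr_swap]; linarith)⟩
  · rintro ⟨d₁, d₂, h⟩
    exact ⟨_, _, min_of_norm h0 hpi h⟩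

def Arc (ω : ℝ) (q p : Plane) : Set Plane :=
  {x | 0 ≤ cr (p - x) (q - x) ∧ dt (p - x) (q - x) * sin ω = cos ω * cr (p - x) (q - x)}

def Edge (V : Set Plane) (q p : Plane) : Prop :=
  q ∈ V ∧ p ∈ V ∧ q ≠ p ∧ ∀ v ∈ V, 0 ≤ cr (p - q) (v - q)

lemma cr_comb (d₁ d₂ : Plane) (a b a' b' : ℝ) :
    cr (a • d₁ + b • d₂) (a' • d₁ + b' • d₂) = (a * b' - b * a') * cr d₁ d₂ := by
  simp [cr]; ring

lemma dt_comb (d₁ d₂ : Plane) (a b a' b' : ℝ) :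
    dt (a • d₁ + b • d₂) (a' • d₁ + b' • d₂) =
      a * a' * dt d₁ d₁ + b * b' * dt d₂ d₂ + (a * b' + b * a') * dt d₁ d₂ := by
  simp [dt]; ring

lemma right_mem_arc (ω : ℝ) (q p : Plane) : p ∈ Arc ω q p := by
  simp [Arc, cr, dt]

lemma left_mem_arc (ω : ℝ) (q p : Plane) : q ∈ Arc ω q p := by
  simp [Arc, cr, dt]

lemma cloud_fwd {V : Set Plane} {ω : ℝ} (h0 : 0 < ω) (hpi : ω < π) (hcos : cos ω ≤ 0)
    (H : ∀ v ∈ V, ∀ p ∈ V, ∀ q ∈ V, p ≠ v → q ≠ v → ∠ p v q < ω)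
    (hE : ∀ v ∈ V, ∃ q p, Edge V q p ∧ (v = q ∨ v = p)) {x d₁ d₂ : Plane}
    (h : NormWedge V ω x d₁ d₂) : ∃ q p, Edge V q p ∧ x ∈ Arc ω q p := by
  have hs0 := sin_pos_of_pos_of_lt_pi h0 hpi
  obtain ⟨h1, h2, h3, h4, h5, ⟨p, hp, hp0⟩, ⟨q, hq, hq0⟩⟩ := h
  have hc : 0 < cr d₁ d₂ := by rw [h3]; exact hs0
  have ep := decomp hc (p - x)
  rw [hp0] at ep
  have eq := decomp hc (q - x)
  rw [hq0] at eq
  have hs := div_nonneg (h5 p hp).2 hc.le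
  have ht := div_nonneg (h5 q hq).1 hc.le
  rw [zero_div] at ep eq
  set s := cr (p - x) d₂ / cr d₁ d₂
  set t := cr d₁ (q - x) / cr d₁ d₂
  have hcr : cr (p - x) (q - x) = s * t * sin ω := by
    rw [ep, eq, cr_comb, h3]; ring
  have hdt : dt (p - x) (q - x) = s * t * cos ω := by
    rw [ep, eq, dt_comb, h4]; ring
  by_cases hpq : p = q
  · subst hpq
    have hz : s * t = 0 := by
      have : cr (p - x) (p - x) = 0 := by simp [cr]; ring
      rw [hcr] at this
      rcases mul_eq_zero.1 this with h | h
      · exact h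
      · exact absurd h hs0.ne'
    have : p - x = 0 := zero_of_dt _ (by rw [hdt, hz]; ring)
    have hx : x = p := (sub_eq_zero.1 this).symm
    obtain ⟨q', p', hed, hv⟩ := hE p hp
    refine ⟨q', p', hed, ?_⟩
    rcases hv with hv | hv
    · rw [hx, hv]; exact left_mem_arc _ _ _
    · rw [hx, hv]; exact right_mem_arc _ _ _
  · refine ⟨q, p, ⟨hq, hp, Ne.symm hpq, ?_⟩, ?_, ?_⟩
    · intro v hv
      by_contra hneg
      push Not at hneg
      have hvp : p ≠ v := by
        rintro rfl
        have : cr (p - q) (p - q) = 0 := by simp [cr]; ring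
        linarith
      have hvq : q ≠ v := by
        rintro rfl
        have : cr (p - q) (q - q) = 0 := by simp [cr]
        linarith
      have ev := decomp hc (v - x)
      have ha := div_nonneg (h5 v hv).2 hc.le
      have hb := div_nonneg (h5 v hv).1 hc.le
      set α := cr (v - x) d₂ / cr d₁ d₂
      set β := cr d₁ (v - x) / cr d₁ d₂
      have e1 : p - q = s • d₁ + (-t) • d₂ := by
        have : p - q = (p - x) - (q - x) := by abel
        rw [this, ep, eq]; module
      have e2 : v - q = α • d₁ + (β - t) • d₂ := by
        have : v - q = (v - x) - (q - x) := by abel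
        rw [this, ev, eq]; module
      have e3 : p - v = (s - α) • d₁ + (-β) • d₂ := by
        have : p - v = (p - x) - (v - x) := by abel
        rw [this, ep, ev]; module
      have e4 : q - v = (-α) • d₁ + (t - β) • d₂ := by
        have : q - v = (q - x) - (v - x) := by abel
        rw [this, eq, ev]; module
      rw [e1, e2, cr_comb, h3] at hneg
      have hn2 : s * β + t * α < s * t := by
        by_contra hh
        push Not at hh
        nlinarith [mul_nonneg (sub_nonneg.2 hh) hs0.le]
      have hs1 : 0 < s := by
        rcases hs.lt_or_eq with h | h
        · exact h
        · rw [← h] at hn2; nlinarith [mul_nonneg ht ha]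
      have ht1 : 0 < t := by
        rcases ht.lt_or_eq with h | h
        · exact h
        · rw [← h] at hn2; nlinarith [mul_nonneg hs hb]
      have hals : α ≤ s := by nlinarith [mul_nonneg hs hb]
      have hbt : β ≤ t := by nlinarith [mul_nonneg ht ha]
      have hpv : cr (p - v) (q - v) = (s * t - s * β - t * α) * sin ω := by
        rw [e3, e4, cr_comb, h3]; ring
      have hQ := Q_pos hpi (sub_ne_zero.2 hvp) (sub_ne_zero.2 hvq) (H v hv p hp q hq hvp hvq)
        (by rw [hpv]; exact mul_nonneg (by linarith) hs0.le)
      rw [hpv, e3, e4, dt_comb, h1, h2, h4] at hQ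
      have hQ2 : 0 < sin ω * (-(s - α) * α - β * (t - β) + 2 * (α * β) * cos ω) := by
        calc _ < _ := hQ
          _ = _ := by ring
      have hQ3 := pos_of_mul_pos_right hQ2 hs0.le
      have i1 := mul_nonneg (sub_nonneg.2 hals) ha
      have i2 := mul_nonneg hb (sub_nonneg.2 hbt)
      have i3 := mul_nonneg (mul_nonneg ha hb) (neg_nonneg.2 hcos)
      linarith
    · rw [hcr]; positivity
    · rw [hcr, hdt]; ring

def Jr (u : Plane) : Plane := !₂[-u 1, u 0]

lemma alg_neg {s t α β c : ℝ} (hs : 0 < s) (ht : 0 < t) (hb : β < 0) (hc : c ≤ 0)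
    (h : 0 ≤ s * (β - t) + t * α) (hQ : 0 < -s * (α - s) + β * t - 2 * c * (s * β)) : False := by
  have i0 : 0 ≤ α - s := by
    have h1 : 0 < s * -β := mul_pos hs (by linarith)
    have h2 : 0 ≤ t * (α - s) := by linarith
    exact nonneg_of_mul_nonneg_right h2 ht
  have i1 := mul_nonneg hs.le i0
  have i2 : 0 < -β * t := mul_pos (by linarith) ht
  have i3 : 0 ≤ -c * (s * -β) := mul_nonneg (by linarith) (mul_pos hs (by linarith)).le
  linarith

set_option maxHeartbeats 1000000 in
lemma cloud_bwd {V : Set Plane} {ω : ℝ} (h0 : 0 < ω) (hpi : ω < π) (hcos : cos ω ≤ 0)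
    (H : ∀ v ∈ V, ∀ p ∈ V, ∀ q ∈ V, p ≠ v → q ≠ v → ∠ p v q < ω)
    {x q p : Plane} (hed : Edge V q p) (hx : x ∈ Arc ω q p) :
    ∃ d₁ d₂, NormWedge V ω x d₁ d₂ := by
  have hs0 := sin_pos_of_pos_of_lt_pi h0 hpi
  have hsc := sin_sq_add_cos_sq ω
  obtain ⟨hq, hp, hqp, hall⟩ := hed
  obtain ⟨hc0, hcirc⟩ := hx
  rcases hc0.lt_or_eq with hc | hc
  · have hL := lagr (p - x) (q - x)
    rw [← normsq_dt, ← normsq_dt] at hL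
    have hu : p - x ≠ 0 := by intro h; rw [h] at hc; simp [cr] at hc
    have hw : q - x ≠ 0 := by intro h; rw [h] at hc; simp [cr] at hc
    have nu : 0 < ‖p - x‖ := norm_pos_iff.2 hu
    have nw : 0 < ‖q - x‖ := norm_pos_iff.2 hw
    have nu2 := normsq_dt (p - x)
    have nw2 := normsq_dt (q - x)
    set s := ‖p - x‖
    set t := ‖q - x‖
    have k1 : cr (p - x) (q - x) = s * t * sin ω := by
      apply (pow_left_inj₀ hc0 (by positivity) two_ne_zero).1
      linear_combination sin ω ^ 2 * hL - (cr (p - x) (q - x))^2 * hsc -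
        (dt (p - x) (q - x) * sin ω + cos ω * cr (p - x) (q - x)) * hcirc
    have k2 : dt (p - x) (q - x) = s * t * cos ω := by
      rw [k1] at hcirc
      apply mul_right_cancel₀ hs0.ne'
      rw [hcirc]; ring
    obtain ⟨d₁, hd₁⟩ : ∃ d₁, d₁ = s⁻¹ • (p - x) := ⟨_, rfl⟩
    obtain ⟨d₂, hd₂⟩ : ∃ d₂, d₂ = t⁻¹ • (q - x) := ⟨_, rfl⟩
    have ep : p - x = s • d₁ + (0:ℝ) • d₂ := by
      rw [hd₁, smul_smul, mul_inv_cancel₀ nu.ne']; simp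
    have eq : q - x = (0:ℝ) • d₁ + t • d₂ := by
      rw [hd₂, smul_smul, mul_inv_cancel₀ nw.ne']; simp
    have h1 : dt d₁ d₁ = 1 := by
      have : dt d₁ d₁ = s⁻¹ ^ 2 * dt (p - x) (p - x) := by rw [hd₁]; simp [dt]; ring
      rw [this, ← nu2]; field_simp
    have h2 : dt d₂ d₂ = 1 := by
      have : dt d₂ d₂ = t⁻¹ ^ 2 * dt (q - x) (q - x) := by rw [hd₂]; simp [dt]; ring
      rw [this, ← nw2]; field_simp
    have h3 : cr d₁ d₂ = sin ω := by
      have : cr d₁ d₂ = s⁻¹ * t⁻¹ * cr (p - x) (q - x) := by rw [hd₁, hd₂]; simp [cr]; ring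
      rw [this, k1]; field_simp
    have h4 : dt d₁ d₂ = cos ω := by
      have : dt d₁ d₂ = s⁻¹ * t⁻¹ * dt (p - x) (q - x) := by rw [hd₁, hd₂]; simp [dt]; ring
      rw [this, k2]; field_simp
    have hcd : 0 < cr d₁ d₂ := by rw [h3]; exact hs0
    refine ⟨d₁, d₂, h1, h2, h3, h4, ?_, ⟨p, hp, ?_⟩, ⟨q, hq, ?_⟩⟩
    · intro v hv
      have hedge := hall v hv
      have ev := decomp hcd (v - x)
      obtain ⟨α, hα⟩ : ∃ α, α = cr (v - x) d₂ / cr d₁ d₂ := ⟨_, rfl⟩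
      obtain ⟨β, hβ⟩ : ∃ β, β = cr d₁ (v - x) / cr d₁ d₂ := ⟨_, rfl⟩
      rw [← hα, ← hβ] at ev
      have hα' : cr (v - x) d₂ = α * cr d₁ d₂ := by rw [hα]; field_simp
      have hβ' : cr d₁ (v - x) = β * cr d₁ d₂ := by rw [hβ]; field_simp
      rw [hα', hβ']
      have e1 : p - q = s • d₁ + (-t) • d₂ := by
        have : p - q = (p - x) - (q - x) := by abel
        rw [this, ep, eq]; module
      have e1' : q - p = (-s) • d₁ + t • d₂ := by
        have : q - p = (q - x) - (p - x) := by abel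
        rw [this, ep, eq]; module
      have e2 : v - q = α • d₁ + (β - t) • d₂ := by
        have : v - q = (v - x) - (q - x) := by abel
        rw [this, ev, eq]; module
      have e3 : v - p = (α - s) • d₁ + β • d₂ := by
        have : v - p = (v - x) - (p - x) := by abel
        rw [this, ep, ev]; module
      have hedge' := hedge
      rw [e1, e2, cr_comb] at hedge
      have hedge2 : 0 ≤ s * (β - t) + t * α := by
        have := nonneg_of_mul_nonneg_left hedge hcd
        linarith
      constructor
      · by_contra hneg
        have hb : β < 0 := by
          by_contra hh
          push Not at hh
          exact hneg (mul_nonneg hh hcd.le)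
        have hvp : v ≠ p := by
          rintro rfl
          have : cr d₁ (v - x) = 0 := by rw [ep]; simp [cr]; ring
          rw [this] at hβ'
          rcases mul_eq_zero.1 hβ'.symm with h | h
          · exact hb.ne h
          · exact hcd.ne' h
        have hcr2 : cr (v - p) (q - p) = cr (p - q) (v - q) := by simp [cr]; ring
        have hQ := Q_pos hpi (sub_ne_zero.2 hvp) (sub_ne_zero.2 hqp) (H p hp v hv q hq hvp hqp)
          (by rw [hcr2]; exact hedge')
        rw [e3, e1', dt_comb, cr_comb, h1, h2, h3, h4] at hQ
        have hQ2 : 0 < sin ω * (-s * (α - s) + β * t - 2 * cos ω * (s * β)) := by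
          calc _ < _ := hQ
            _ = _ := by ring
        have hQ3 := pos_of_mul_pos_right hQ2 hs0.le
        exact alg_neg nu nw hb hcos hedge2 hQ3
      · by_contra hneg
        have hb : α < 0 := by
          by_contra hh
          push Not at hh
          exact hneg (mul_nonneg hh hcd.le)
        have hvq : v ≠ q := by
          rintro rfl
          have : cr (v - x) d₂ = 0 := by rw [eq]; simp [cr]; ring
          rw [this] at hα'
          rcases mul_eq_zero.1 hα'.symm with h | h
          · exact hb.ne h
          · exact hcd.ne' h
        have hQ := Q_pos hpi (sub_ne_zero.2 hqp.symm) (sub_ne_zero.2 hvq)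
          (H q hq p hp v hv hqp.symm hvq) hedge'
        rw [e1, e2, dt_comb, cr_comb, h1, h2, h3, h4] at hQ
        have hQ2 : 0 < sin ω * (-t * (β - t) + α * s - 2 * cos ω * (t * α)) := by
          calc _ < _ := hQ
            _ = _ := by ring
        have hQ3 := pos_of_mul_pos_right hQ2 hs0.le
        exact alg_neg nw nu hb hcos (by linarith) hQ3
    · rw [ep]; simp [cr]; ring
    · rw [eq]; simp [cr]; ring
  · rw [← hc, mul_zero] at hcirc
    have hdt : dt (p - x) (q - x) = 0 := by
      rcases mul_eq_zero.1 hcirc with h | h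
      · exact h
      · exact absurd h hs0.ne'
    have hL := lagr (p - x) (q - x)
    rw [hdt, ← hc] at hL
    have hN : 0 < ‖q - p‖ := norm_pos_iff.2 (sub_ne_zero.2 hqp)
    have hN2 := normsq_dt (q - p)
    have hN3 : dt (q - p) (q - p) = (q 0 - p 0)^2 + (q 1 - p 1)^2 := by simp [dt]; ring
    rw [hN3] at hN2
    set N := ‖q - p‖
    rcases mul_eq_zero.1 (by linarith : dt (p - x) (p - x) * dt (q - x) (q - x) = 0) with h | h
    · have hxp : x = p := (sub_eq_zero.1 (zero_of_dt _ h)).symm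
      subst hxp
      have hm : N⁻¹ ^ 2 * ((q 0 - x 0)^2 + (q 1 - x 1)^2) = 1 := by rw [← hN2]; field_simp
      refine ⟨N⁻¹ • (cos ω • (q - x) - sin ω • Jr (q - x)), N⁻¹ • (q - x), ?_, ?_, ?_, ?_, ?_,
        ⟨x, hp, by simp [cr]⟩, ⟨x, hp, by simp [cr]⟩⟩
      · simp [dt, Jr]
        linear_combination (sin ω ^ 2 + cos ω ^ 2) * hm + hsc
      · simp [dt]
        linear_combination hm
      · simp [cr, Jr]
        linear_combination sin ω * hm
      · simp [dt, Jr]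
        linear_combination cos ω * hm
      · intro v hv
        have hcr2 : cr (v - x) (q - x) = cr (x - q) (v - q) := by simp [cr]; ring
        have hcr3 := hall v hv
        rw [← hcr2] at hcr3
        constructor
        · by_cases hvx : v = x
          · subst hvx; simp [cr]
          · have hQ := Q_pos hpi (sub_ne_zero.2 hvx) (sub_ne_zero.2 hqp)
              (H x hp v hv q hq hvx hqp) hcr3
            have := mul_pos (inv_pos.2 hN) hQ
            refine this.le.trans (le_of_eq ?_)
            simp [cr, dt, Jr]; ring
        · have := mul_nonneg (inv_pos.2 hN).le hcr3
          refine this.trans (le_of_eq ?_)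
          simp [cr]; ring
    · have hxp : x = q := (sub_eq_zero.1 (zero_of_dt _ h)).symm
      subst hxp
      have hm : N⁻¹ ^ 2 * ((x 0 - p 0)^2 + (x 1 - p 1)^2) = 1 := by rw [← hN2]; field_simp
      refine ⟨N⁻¹ • (p - x), N⁻¹ • (cos ω • (p - x) + sin ω • Jr (p - x)), ?_, ?_, ?_, ?_, ?_,
        ⟨x, hq, by simp [cr]⟩, ⟨x, hq, by simp [cr]⟩⟩
      · simp [dt]
        linear_combination hm
      · simp [dt, Jr]
        linear_combination (sin ω ^ 2 + cos ω ^ 2) * hm + hsc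
      · simp [cr, Jr]
        linear_combination sin ω * hm
      · simp [dt, Jr]
        linear_combination cos ω * hm
      · intro v hv
        have hcr3 := hall v hv
        constructor
        · have := mul_nonneg (inv_pos.2 hN).le hcr3
          refine this.trans (le_of_eq ?_)
          simp [cr]; ring
        · by_cases hvx : v = x
          · subst hvx; simp [cr]
          · have hQ := Q_pos hpi (sub_ne_zero.2 hqp.symm) (sub_ne_zero.2 hvx)
              (H x hq p hp v hv hqp.symm hvx) hcr3
            have := mul_pos (inv_pos.2 hN) hQ
            refine this.le.trans (le_of_eq ?_)
            simp [cr, dt, Jr]; ring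

lemma cloud_iff {V : Set Plane} {ω : ℝ} (h0 : 0 < ω) (hpi : ω < π) (hcos : cos ω ≤ 0)
    (H : ∀ v ∈ V, ∀ p ∈ V, ∀ q ∈ V, p ≠ v → q ≠ v → ∠ p v q < ω)
    (hE : ∀ v ∈ V, ∃ q p, Edge V q p ∧ (v = q ∨ v = p)) (x : Plane) :
    x ∈ omegaCloud (convexHull ℝ V) ω ↔ ∃ q p, Edge V q p ∧ x ∈ Arc ω q p := by
  rw [cloud_norm h0 hpi]
  constructor
  · rintro ⟨d₁, d₂, h⟩
    exact cloud_fwd h0 hpi hcos H hE h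
  · rintro ⟨q, p, h1, h2⟩
    exact cloud_bwd h0 hpi hcos H h1 h2

/-- strictly convex counterclockwise polygon -/
def CCW {n : ℕ} [NeZero n] (f : Fin n → Plane) : Prop :=
  ∀ i j, j ≠ i → j ≠ i + 1 → 0 < cr (f (i + 1) - f i) (f j - f i)

section
variable {n : ℕ} [NeZero n] {f : Fin n → Plane}

lemma ccw_inj (h : CCW f) (h1 : ∀ i : Fin n, i + 1 + 1 ≠ i) (h2 : ∀ i : Fin n, i + 1 + 1 ≠ i + 1) :
    Function.Injective f := by
  intro j i hij
  by_contra hne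
  by_cases hj : j = i + 1
  · subst hj
    have := h i (i + 1 + 1) (h1 i) (h2 i)
    rw [hij] at this
    simp [cr] at this
  · have := h i j hne hj
    rw [hij] at this
    simp [cr] at this

lemma ccw_nonneg (h : CCW f) (i j : Fin n) : 0 ≤ cr (f (i + 1) - f i) (f j - f i) := by
  by_cases h1 : j = i
  · subst h1; simp [cr]
  by_cases h2 : j = i + 1
  · subst h2; apply le_of_eq; simp [cr]; ring
  exact (h i j h1 h2).le

lemma ccw_edge (h : CCW f) (hinj : Function.Injective f) (h0 : ∀ i : Fin n, i + 1 ≠ i) (q p : Plane) :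
    Edge (range f) q p ↔ ∃ i, q = f i ∧ p = f (i + 1) := by
  constructor
  · rintro ⟨⟨i, rfl⟩, ⟨j, rfl⟩, hne, hall⟩
    refine ⟨i, rfl, ?_⟩
    by_contra hj
    have h1 := h i j (by rintro rfl; exact hne rfl) (by rintro rfl; exact hj rfl)
    have h2 := hall _ ⟨i + 1, rfl⟩
    rw [cr_swap] at h2
    linarith
  · rintro ⟨i, rfl, rfl⟩
    refine ⟨⟨i, rfl⟩, ⟨i + 1, rfl⟩, fun hh => h0 i (hinj hh).symm, ?_⟩
    rintro _ ⟨j, rfl⟩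
    exact ccw_nonneg h i j

lemma ccw_cloud (h : CCW f) (hinj : Function.Injective f) (h0 : ∀ i : Fin n, i + 1 ≠ i)
    {ω : ℝ} (hω : 0 < ω) (hpi : ω < π) (hcos : cos ω ≤ 0)
    (H : ∀ i j k, j ≠ i → k ≠ i → ∠ (f j) (f i) (f k) < ω) (x : Plane) :
    x ∈ omegaCloud (convexHull ℝ (range f)) ω ↔ ∃ i, x ∈ Arc ω (f i) (f (i + 1)) := by
  rw [cloud_iff hω hpi hcos]
  · constructor
    · rintro ⟨q, p, he, hx⟩
      obtain ⟨i, rfl, rfl⟩ := (ccw_edge h hinj h0 q p).1 he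
      exact ⟨i, hx⟩
    · rintro ⟨i, hx⟩
      exact ⟨_, _, (ccw_edge h hinj h0 _ _).2 ⟨i, rfl, rfl⟩, hx⟩
  · rintro _ ⟨i, rfl⟩ _ ⟨j, rfl⟩ _ ⟨k, rfl⟩ h1 h2
    exact H i j k (by rintro rfl; exact h1 rfl) (by rintro rfl; exact h2 rfl)
  · rintro _ ⟨i, rfl⟩
    exact ⟨_, _, (ccw_edge h hinj h0 _ _).2 ⟨i, rfl, rfl⟩, Or.inl rfl⟩

lemma ccw_not_mem (h : CCW f) (h1 : ∀ i : Fin n, i + 1 + 1 ≠ i) (h2 : ∀ i : Fin n, i + 1 + 1 ≠ i + 1)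
    (m : Fin n) (S : Set Plane) (hS : ∀ v ∈ S, ∃ j, j ≠ m + 1 ∧ v = f j) :
    f (m + 1) ∉ convexHull ℝ S := by
  intro hmem
  have key := hull_pos (V := S) (d := (f (m + 1 + 1) - f (m + 1)) + (f (m + 1) - f m))
    (x := f (m + 1)) ?_ _ hmem
  · simp [cr] at key
  · intro v hv
    obtain ⟨j, hj, rfl⟩ := hS v hv
    have e : cr ((f (m + 1 + 1) - f (m + 1)) + (f (m + 1) - f m)) (f j - f (m + 1)) =
        cr (f (m + 1 + 1) - f (m + 1)) (f j - f (m + 1)) + cr (f (m + 1) - f m) (f j - f m) := by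
      simp [cr]; ring
    rw [e]
    by_cases hjm : j = m + 1 + 1
    · have := h m j (by rw [hjm]; exact h1 m) (by rw [hjm]; exact h2 m)
      linarith [ccw_nonneg h (m + 1) j]
    · have := h (m + 1) j hj hjm
      linarith [ccw_nonneg h m j]

lemma ccw_polygon (h : CCW f) (hn : 3 ≤ n) (h1 : ∀ i : Fin n, i + 1 + 1 ≠ i)
    (h2 : ∀ i : Fin n, i + 1 + 1 ≠ i + 1) :
    IsConvexPolygon (Finset.univ.image f) := by
  have hinj := ccw_inj h h1 h2
  refine ⟨by rw [Finset.card_image_of_injective _ hinj]; simpa using hn, ?_⟩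
  intro v hv
  obtain ⟨i, -, rfl⟩ := Finset.mem_image.1 hv
  have := ccw_not_mem h h1 h2 (i - 1)
  rw [sub_add_cancel] at this
  apply this
  intro v hv
  rw [Finset.mem_coe, Finset.mem_erase, Finset.mem_image] at hv
  obtain ⟨hne, j, -, rfl⟩ := hv
  exact ⟨j, by rintro rfl; exact hne rfl, rfl⟩

lemma alg_cone {s t s' t' N M c d : ℝ} (hs : 0 ≤ s) (ht : 0 ≤ t) (hs' : 0 ≤ s') (ht' : 0 ≤ t')
    (hN : 0 ≤ N) (hM : 0 ≤ M) (hL : c ^ 2 + d ^ 2 = N * M) (hcd : 0 ≤ c + d)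
    (hD : 0 ≤ s * t' - t * s') :
    0 ≤ (s * t' - t * s') * c + (s * s' * N + t * t' * M + (s * t' + t * s') * d) := by
  have h1 : 0 ≤ (s * t' + t * s') * (c + d) := by positivity
  have h2 : 2 * (t * s') * c ≤ s * s' * N + t * t' * M := by
    apply le_of_sq_le_sq _ (by positivity)
    have a1 : c ^ 2 ≤ N * M := by nlinarith [sq_nonneg d]
    have a2 : (2 * (t * s') * c) ^ 2 ≤ 4 * (t * s') ^ 2 * (N * M) := by
      have := mul_le_mul_of_nonneg_left a1 (by positivity : 0 ≤ 4 * (t * s') ^ 2)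
      linarith
    have a3 : 0 ≤ (t * s') * (s * t' - t * s') * (N * M) := by positivity
    nlinarith [sq_nonneg (s * s' * N - t * t' * M)]
  linarith

lemma cone_angle (h : CCW f) (h1 : ∀ i : Fin n, i + 1 + 1 ≠ i) (h2 : ∀ i : Fin n, i + 1 + 1 ≠ i + 1)
    (m : Fin n) (ha : 0 ≤ cr (f (m + 1 + 1) - f (m + 1)) (f m - f (m + 1)) +
      dt (f (m + 1 + 1) - f (m + 1)) (f m - f (m + 1)))
    {a b : Plane} (hA : a ∈ convexHull ℝ (range f)) (hB : b ∈ convexHull ℝ (range f))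
    (hav : a ≠ f (m + 1)) (hbv : b ≠ f (m + 1)) : ∠ a (f (m + 1)) b ≤ 3 * π / 4 := by
  have hcone : ∀ y ∈ convexHull ℝ (range f), 0 ≤ cr (f (m + 1 + 1) - f (m + 1)) (y - f (m + 1)) ∧
      0 ≤ cr (y - f (m + 1)) (f m - f (m + 1)) := by
    intro y hy
    constructor
    · refine hull_nonneg ?_ y hy
      rintro _ ⟨j, rfl⟩
      exact ccw_nonneg h _ _
    · have := hull_nonneg (V := range f) (d := f (m + 1) - f m) (x := f m) ?_ y hy
      · refine this.trans (le_of_eq ?_)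
        simp [cr]; ring
      · rintro _ ⟨j, rfl⟩
        exact ccw_nonneg h _ _
  have hc : 0 < cr (f (m + 1 + 1) - f (m + 1)) (f m - f (m + 1)) := by
    have := h m (m + 1 + 1) (h1 m) (h2 m)
    refine this.trans_le (le_of_eq ?_)
    simp [cr]; ring
  obtain ⟨N, hN⟩ : ∃ N, N = f (m + 1 + 1) - f (m + 1) := ⟨_, rfl⟩
  obtain ⟨M, hM⟩ : ∃ M, M = f m - f (m + 1) := ⟨_, rfl⟩
  rw [← hN, ← hM] at hc ha
  have main : ∀ a b : Plane, a ∈ convexHull ℝ (range f) → b ∈ convexHull ℝ (range f) →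
      a ≠ f (m + 1) → b ≠ f (m + 1) → 0 ≤ cr (a - f (m + 1)) (b - f (m + 1)) →
      ∠ a (f (m + 1)) b ≤ 3 * π / 4 := by
    intro a b hA hB hav hbv hab
    apply angle_le_of (sub_ne_zero.2 hav) (sub_ne_zero.2 hbv) hab
    obtain ⟨a1, a2⟩ := hcone a hA
    obtain ⟨b1, b2⟩ := hcone b hB
    rw [← hN] at a1 b1
    rw [← hM] at a2 b2
    have ea := decomp hc (a - f (m + 1))
    have eb := decomp hc (b - f (m + 1))
    have s0 := div_nonneg a2 hc.le
    have t0 := div_nonneg a1 hc.le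
    have s0' := div_nonneg b2 hc.le
    have t0' := div_nonneg b1 hc.le
    set s := cr (a - f (m + 1)) M / cr N M
    set t := cr N (a - f (m + 1)) / cr N M
    set s' := cr (b - f (m + 1)) M / cr N M
    set t' := cr N (b - f (m + 1)) / cr N M
    rw [ea, eb, cr_comb] at hab
    have hD := nonneg_of_mul_nonneg_left hab hc
    rw [ea, eb, cr_comb, dt_comb]
    exact alg_cone s0 t0 s0' t0' (by rw [← normsq_dt]; positivity) (by rw [← normsq_dt]; positivity)
      (lagr N M) ha hD
  rcases le_total 0 (cr (a - f (m + 1)) (b - f (m + 1))) with hh | hh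
  · exact main a b hA hB hav hbv hh
  · rw [EuclideanGeometry.angle_comm]
    exact main b a hB hA hbv hav (by rw [cr_swap]; linarith)

end

lemma arc_split (q p b : Plane) (hb0 : b 0 = (q 0 + p 0) / 2 + √3 / 6 * (p 1 - q 1))
    (hb1 : b 1 = (q 1 + p 1) / 2 - √3 / 6 * (p 0 - q 0)) (x : Plane) :
    x ∈ Arc (2 * π / 3) q p ↔ x ∈ Arc (5 * π / 6) q b ∨ x ∈ Arc (5 * π / 6) b p := by
  have c1 : cos (2 * π / 3) = -(1 / 2) := by
    rw [show 2 * π / 3 = π - π / 3 by ring, cos_pi_sub, cos_pi_div_three]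
  have s1 : sin (2 * π / 3) = √3 / 2 := by
    rw [show 2 * π / 3 = π - π / 3 by ring, sin_pi_sub, sin_pi_div_three]
  have c2 : cos (5 * π / 6) = -(√3 / 2) := by
    rw [show 5 * π / 6 = π - π / 6 by ring, cos_pi_sub, cos_pi_div_six]
  have s2 : sin (5 * π / 6) = 1 / 2 := by
    rw [show 5 * π / 6 = π - π / 6 by ring, sin_pi_sub, sin_pi_div_six]
  have hr : √3 ^ 2 = 3 := sq_sqrt (by norm_num)
  have hr0 : 0 < √3 := by positivity
  simp only [Arc, mem_ofPred_eq, c1, s1, c2, s2]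
  have hU : 0 ≤ dt (p - x) (p - x) := by rw [← normsq_dt]; positivity
  have hW : 0 ≤ dt (q - x) (q - x) := by rw [← normsq_dt]; positivity
  have hL := lagr (p - x) (q - x)
  have e1 : cr (b - x) (q - x) = cr (p - x) (q - x) / 2 +
      √3 / 6 * (dt (p - x) (q - x) - dt (q - x) (q - x)) := by
    simp [cr, dt, hb0, hb1]; ring
  have e2 : dt (b - x) (q - x) = (dt (p - x) (q - x) + dt (q - x) (q - x)) / 2 -
      √3 / 6 * cr (p - x) (q - x) := by
    simp [cr, dt, hb0, hb1]; ring
  have e3 : cr (p - x) (b - x) = cr (p - x) (q - x) / 2 +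
      √3 / 6 * (dt (p - x) (q - x) - dt (p - x) (p - x)) := by
    simp [cr, dt, hb0, hb1]; ring
  have e4 : dt (p - x) (b - x) = (dt (p - x) (q - x) + dt (p - x) (p - x)) / 2 -
      √3 / 6 * cr (p - x) (q - x) := by
    simp [cr, dt, hb0, hb1]; ring
  rw [e1, e2, e3, e4]
  generalize cr (p - x) (q - x) = c at *
  generalize dt (p - x) (q - x) = d at *
  generalize dt (p - x) (p - x) = U at *
  generalize dt (q - x) (q - x) = W at *
  clear e1 e2 e3 e4 hb0 hb1 c1 s1 c2 s2
  generalize √3 = r at *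
  have q1 : ∀ W : ℝ, ((d + W) / 2 - r / 6 * c) * (1 / 2) =
      -(r / 2) * (c / 2 + r / 6 * (d - W)) ↔ c = -r * d := by
    intro W
    constructor
    · intro h; linear_combination 2 * r * h - (c / 3 + r / 6 * (d - W)) * hr
    · intro h; linear_combination (r / 6) * h + (- d / 12 - W / 12) * hr
  have q3 : d * (r / 2) = -(1 / 2) * c ↔ c = -r * d := by
    constructor <;> intro h <;> linarith
  rw [q1, q1, q3]
  constructor
  · rintro ⟨h0, rfl⟩
    have hd : d ≤ 0 := by
      by_contra hh
      push Not at hh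
      nlinarith [mul_pos hr0 hh]
    have h4 : 4 * d ^ 2 = U * W := by linear_combination hL - d ^ 2 * hr
    by_cases hw : W ≤ -2 * d
    · left
      refine ⟨?_, rfl⟩
      nlinarith [mul_nonneg hr0.le (sub_nonneg.2 hw)]
    · right
      refine ⟨?_, rfl⟩
      have hu : U ≤ -2 * d := by
        by_contra hu
        push Not at hu hw
        nlinarith [mul_lt_mul'' hu hw (by linarith) (by linarith)]
      nlinarith [mul_nonneg hr0.le (sub_nonneg.2 hu)]
  · rintro (⟨h0, rfl⟩ | ⟨h0, rfl⟩)
    · refine ⟨?_, rfl⟩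
      have : 0 ≤ r * (-2 * d - W) := by linarith
      have := nonneg_of_mul_nonneg_right this hr0
      nlinarith [mul_nonneg hr0.le (by linarith : 0 ≤ -d)]
    · refine ⟨?_, rfl⟩
      have : 0 ≤ r * (-2 * d - U) := by linarith
      have := nonneg_of_mul_nonneg_right this hr0
      nlinarith [mul_nonneg hr0.le (by linarith : 0 ≤ -d)]

/-- the hexagon `c d e f a b` -/
def hexa (E A : ℝ) : Fin 6 → Plane :=
  ![!₂[0, 0], !₂[E / 2, -(√3 * E / 6)], !₂[E, 0], !₂[(E + A) / 2, √3 * (A + E) / 6],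
    !₂[A / 2, √3 * A / 2], !₂[0, √3 * A / 3]]

/-- the triangle `c e a` -/
def tria (E A : ℝ) : Fin 3 → Plane := ![!₂[0, 0], !₂[E, 0], !₂[A / 2, √3 * A / 2]]

lemma cr_scale {a b c d r P : ℝ} (hr : 0 < r) (h : a * d - b * c = r * P) (hP : 0 < P) :
    0 < a * d - b * c := by rw [h]; positivity

lemma tria_ccw {E A : ℝ} (hE : 0 < E) (hA : E < A) : CCW (tria E A) := by
  have hA0 : 0 < A := by linarith
  have hr : 0 < √3 := by positivity
  have hr2 : √3 ^ 2 = 3 := sq_sqrt (by norm_num)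
  have hrEA : 0 < √3 * (E * A) := by positivity
  intro i j h1 h2
  fin_cases i <;> fin_cases j <;> simp at h1 h2 <;> simp [tria, cr] <;> first | positivity | nlinarith

set_option maxHeartbeats 2000000 in
lemma hexa_ccw {E A : ℝ} (hE : 0 < E) (hA : E < A) (hA2 : A < 6 / 5 * E) : CCW (hexa E A) := by
  have hr : 0 < √3 := by positivity
  have hA0 : 0 < A := by linarith
  have k1 : 0 < √3 * (E * E) := by positivity
  have k2 : 0 < √3 * (E * (A - E)) := mul_pos hr (mul_pos hE (by linarith))
  have k3 : 0 < √3 * ((A - E) * (A - E)) := mul_pos hr (mul_pos (by linarith) (by linarith))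
  have k4 : 0 < √3 * (E * (6 / 5 * E - A)) := mul_pos hr (mul_pos hE (by linarith))
  have k5 : 0 < √3 * (A * (6 / 5 * E - A)) := mul_pos hr (mul_pos hA0 (by linarith))
  intro i j h1 h2
  fin_cases i <;> fin_cases j <;> simp at h1 h2 <;> simp [hexa, cr] <;> ring_nf <;>
    ring_nf at k1 k2 k3 k4 k5 <;> nlinarith

set_option maxHeartbeats 2000000 in
lemma hexa_ang {E A : ℝ} (hE : 0 < E) (hA : E < A) (hA2 : A < 6 / 5 * E) (m : Fin 6) :
    0 ≤ cr (hexa E A (m + 1 + 1) - hexa E A (m + 1)) (hexa E A m - hexa E A (m + 1)) +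
      dt (hexa E A (m + 1 + 1) - hexa E A (m + 1)) (hexa E A m - hexa E A (m + 1)) := by
  have hr : 0 < √3 - 17 / 10 := by
    have : (17 / 10 : ℝ) < √3 := by rw [lt_sqrt] <;> norm_num
    linarith
  have hr2 : √3 ^ 2 = 3 := sq_sqrt (by norm_num)
  have hA0 : 0 < A := by linarith
  have k1 : 0 < (√3 - 17 / 10) * (E * E) := by positivity
  have k2 : 0 < (√3 - 17 / 10) * (E * (A - E)) := mul_pos hr (mul_pos hE (by linarith))
  have k3 : 0 < (√3 - 17 / 10) * ((A - E) * (A - E)) := mul_pos hr (mul_pos (by linarith) (by linarith))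
  have l1 : 0 < E * E := by positivity
  have l2 : 0 < E * (A - E) := mul_pos hE (by linarith)
  have l3 : 0 < (A - E) * (A - E) := mul_pos (by linarith) (by linarith)
  have l4 : 0 < E * (6 / 5 * E - A) := mul_pos hE (by linarith)
  have l5 : 0 < A * (6 / 5 * E - A) := mul_pos hA0 (by linarith)
  fin_cases m <;> simp [hexa, cr, dt] <;> ring_nf <;> simp only [hr2] <;>
    ring_nf at k1 k2 k3 l1 l2 l3 l4 l5 <;> nlinarith

lemma hexa_angle {E A : ℝ} (hE : 0 < E) (hA : E < A) (hA2 : A < 6 / 5 * E) (i : Fin 6) {a b : Plane}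
    (ha : a ∈ convexHull ℝ (range (hexa E A))) (hb : b ∈ convexHull ℝ (range (hexa E A)))
    (hav : a ≠ hexa E A i) (hbv : b ≠ hexa E A i) : ∠ a (hexa E A i) b ≤ 3 * π / 4 := by
  obtain ⟨m, rfl⟩ : ∃ m, i = m + 1 := ⟨i - 1, by rw [sub_add_cancel]⟩
  exact cone_angle (hexa_ccw hE hA hA2) (by decide) (by decide) m (hexa_ang hE hA hA2 m) ha hb hav hbv

theorem main_thm :
    ∃ (V V' : Finset Plane) (ω ω' : ℝ) (a b c d e f : Plane),
      IsConvexPolygon V ∧ IsConvexPolygon V' ∧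
      V.card = 3 ∧ V'.card = 6 ∧
      ω = 2 * π / 3 ∧ ω' = 5 * π / 6 ∧ ω ≠ ω' ∧
      (V : Set Plane) = {a, c, e} ∧ (V' : Set Plane) = {a, b, c, d, e, f} ∧
      ∠ a c e = π / 3 ∧ ∠ c e a = 16 * π / 45 ∧ ∠ e a c = 14 * π / 45 ∧
      (∀ v ∈ V', interiorAngle (convexHull ℝ (V' : Set Plane)) v < ω') ∧
      convexHull ℝ (V : Set Plane) ≠ convexHull ℝ (V' : Set Plane) ∧
      omegaCloud (convexHull ℝ (V : Set Plane)) ω =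
        omegaCloud (convexHull ℝ (V' : Set Plane)) ω' := by
  have hr : (17 / 10 : ℝ) < √3 := by rw [lt_sqrt] <;> norm_num
  have hr2 : √3 ^ 2 = 3 := sq_sqrt (by norm_num)
  have hpi := pi_pos
  have hpi3 := pi_gt_three
  have hpi4 := pi_lt_four
  obtain ⟨C, hC⟩ : ∃ C, C = cos (π / 45) := ⟨_, rfl⟩
  obtain ⟨S, hS⟩ : ∃ S, S = sin (π / 45) := ⟨_, rfl⟩
  have hCS : S ^ 2 + C ^ 2 = 1 := by rw [hC, hS]; exact sin_sq_add_cos_sq _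
  have hS0 : 0 < S := by rw [hS]; exact sin_pos_of_pos_of_lt_pi (by positivity) (by linarith)
  have hS1 : S < 1 / 10 := by
    have : S < π / 45 := by rw [hS]; exact sin_lt (by positivity)
    linarith
  have hC1 : 9 / 10 < C := by
    have : 1 - (π / 45) ^ 2 / 2 ≤ C := by rw [hC]; exact one_sub_sq_div_two_le_cos
    nlinarith
  obtain ⟨E, hE⟩ : ∃ E, E = √3 * C - S := ⟨_, rfl⟩
  obtain ⟨A, hA⟩ : ∃ A, A = √3 * C + S := ⟨_, rfl⟩
  have hE0 : 0 < E := by nlinarith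
  have hEA : E < A := by linarith
  have hA2 : A < 6 / 5 * E := by nlinarith
  have hA0 : 0 < A := by linarith
  have ct := tria_ccw hE0 hEA
  have ch := hexa_ccw hE0 hEA hA2
  have it := ccw_inj ct (by decide) (by decide)
  have ih := ccw_inj ch (by decide) (by decide)
  have cV : ((Finset.univ.image (tria E A) : Finset Plane) : Set Plane) = range (tria E A) := by simp
  have cV' : ((Finset.univ.image (hexa E A) : Finset Plane) : Set Plane) = range (hexa E A) := by simp
  have ang1 : ∠ (!₂[A / 2, √3 * A / 2] : Plane) (!₂[0, 0] : Plane) (!₂[E, 0] : Plane) = π / 3 := by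
    apply angle_eq_of hA0 hE0 _ _ (by positivity) (by linarith)
    · rw [cos_pi_div_three]; simp [dt]; ring
    · simp [dt]; linear_combination A ^ 2 / 4 * hr2
    · simp [dt]; ring
  have c2 : cos (16 * π / 45) = C / 2 - √3 / 2 * S := by
    rw [show 16 * π / 45 = π / 3 + π / 45 by ring, cos_add, cos_pi_div_three, sin_pi_div_three, hC, hS]
    ring
  have c3 : cos (14 * π / 45) = C / 2 + √3 / 2 * S := by
    rw [show 14 * π / 45 = π / 3 - π / 45 by ring, cos_sub, cos_pi_div_three, sin_pi_div_three, hC, hS]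
    ring
  have ang2 : ∠ (!₂[0, 0] : Plane) (!₂[E, 0] : Plane) (!₂[A / 2, √3 * A / 2] : Plane) =
      16 * π / 45 := by
    apply angle_eq_of hE0 (by positivity : 0 < √3) _ _ (by positivity) (by linarith)
    · rw [c2]; simp [dt]; rw [hE, hA]
      linear_combination (1 / 2 * S * √3 * C - S ^ 2 / 2) * hr2
    · simp [dt]; ring
    · simp [dt]; rw [hE, hA]
      linear_combination (√3 * C + S) ^ 2 / 4 * hr2 + C ^ 2 * hr2 + 3 * hCS
  have ang3 : ∠ (!₂[E, 0] : Plane) (!₂[A / 2, √3 * A / 2] : Plane) (!₂[0, 0] : Plane) =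
      14 * π / 45 := by
    apply angle_eq_of (by positivity : 0 < √3) hA0 _ _ (by positivity) (by linarith)
    · rw [c3]; simp [dt]; rw [hE, hA]
      linear_combination (1 / 2 * S * √3 * C - S ^ 2 / 2) * hr2 +
        (√3 ^ 2 * C ^ 2 / 4 + S ^ 2 / 4 - √3 * C * S / 2) * hr2
    · simp [dt]; rw [hE, hA]
      linear_combination (√3 * C + S) ^ 2 / 4 * hr2 + C ^ 2 * hr2 + 3 * hCS
    · simp [dt]; linear_combination A ^ 2 / 4 * hr2
  refine ⟨Finset.univ.image (tria E A), Finset.univ.image (hexa E A), _, _,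
    !₂[A / 2, √3 * A / 2], !₂[0, √3 * A / 3], !₂[0, 0], !₂[E / 2, -(√3 * E / 6)], !₂[E, 0],
    !₂[(E + A) / 2, √3 * (A + E) / 6], ccw_polygon ct (by norm_num) (by decide) (by decide),
    ccw_polygon ch (by norm_num) (by decide) (by decide), ?_, ?_, rfl, rfl, ?_, ?_, ?_,
    ang1, ang2, ang3, ?_, ?_, ?_⟩
  · rw [Finset.card_image_of_injective _ it]; simp
  · rw [Finset.card_image_of_injective _ ih]; simp
  · intro h; linarith
  · rw [cV]
    ext y
    simp only [mem_range, Fin.exists_fin_succ, tria, mem_insert_iff, mem_singleton_iff]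
    simp
    constructor
    · rintro (h | h | h) <;> simp [h]
    · rintro (h | h | h) <;> simp [h]
  · rw [cV']
    ext y
    simp only [mem_range, Fin.exists_fin_succ, hexa, mem_insert_iff, mem_singleton_iff]
    simp
    constructor
    · rintro (h | h | h | h | h | h) <;> simp [h]
    · rintro (h | h | h | h | h | h) <;> simp [h]
  · intro v hv
    obtain ⟨i, -, rfl⟩ := Finset.mem_image.1 hv
    rw [cV']
    have : interiorAngle (convexHull ℝ (range (hexa E A))) (hexa E A i) ≤ 3 * π / 4 := by
      apply Real.sSup_le _ (by positivity)
      rintro θ ⟨a, ha, b, hb, h1, h2, rfl⟩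
      exact hexa_angle hE0 hEA hA2 i ha hb h1 h2
    linarith
  · rw [cV, cV']
    intro heq
    have hb : hexa E A 1 ∈ convexHull ℝ (range (tria E A)) := by
      rw [heq]; exact subset_convexHull ℝ _ ⟨1, rfl⟩
    have := hull_nonneg (V := range (tria E A)) (d := tria E A (0 + 1) - tria E A 0)
      (x := tria E A 0) (by rintro _ ⟨j, rfl⟩; exact ccw_nonneg ct 0 j) _ hb
    simp [tria, hexa, cr] at this
    have h3 : 0 < E * (√3 * E / 6) := by positivity
    linarith
  · rw [cV, cV']
    have cos1 : cos (2 * π / 3) ≤ 0 := cos_nonpos_of_pi_div_two_le_of_le (by linarith) (by linarith)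
    have cos2 : cos (5 * π / 6) ≤ 0 := cos_nonpos_of_pi_div_two_le_of_le (by linarith) (by linarith)
    have ang1' := ang1
    have ang2' := ang2
    have ang3' := ang3
    rw [EuclideanGeometry.angle_comm] at ang1' ang2' ang3'
    ext x
    rw [ccw_cloud ct it (by decide) (by positivity) (by linarith) cos1 ?_ x,
      ccw_cloud ch ih (by decide) (by positivity) (by linarith) cos2 ?_ x]
    · have t0 := arc_split (tria E A 0) (tria E A 1) (hexa E A 1)
        (by simp [tria, hexa]) (by simp [tria, hexa]; ring) x
      have t1 := arc_split (tria E A 1) (tria E A 2) (hexa E A 3)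
        (by simp [tria, hexa]; linear_combination (-A / 12) * hr2) (by simp [tria, hexa]; ring) x
      have t2 := arc_split (tria E A 2) (tria E A 0) (hexa E A 5)
        (by simp [tria, hexa]; linear_combination (A / 12) * hr2) (by simp [tria, hexa]; ring) x
      have L : (∃ i, x ∈ Arc (2 * π / 3) (tria E A i) (tria E A (i + 1))) ↔
          x ∈ Arc (2 * π / 3) (tria E A 0) (tria E A 1) ∨
          x ∈ Arc (2 * π / 3) (tria E A 1) (tria E A 2) ∨
          x ∈ Arc (2 * π / 3) (tria E A 2) (tria E A 0) := by
        constructor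
        · rintro ⟨i, h⟩
          fin_cases i
          · exact Or.inl h
          · exact Or.inr (Or.inl h)
          · exact Or.inr (Or.inr h)
        · rintro (h | h | h)
          · exact ⟨0, h⟩
          · exact ⟨1, h⟩
          · exact ⟨2, h⟩
      have R : (∃ i, x ∈ Arc (5 * π / 6) (hexa E A i) (hexa E A (i + 1))) ↔
          (x ∈ Arc (5 * π / 6) (tria E A 0) (hexa E A 1) ∨
            x ∈ Arc (5 * π / 6) (hexa E A 1) (tria E A 1)) ∨
          (x ∈ Arc (5 * π / 6) (tria E A 1) (hexa E A 3) ∨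
            x ∈ Arc (5 * π / 6) (hexa E A 3) (tria E A 2)) ∨
          (x ∈ Arc (5 * π / 6) (tria E A 2) (hexa E A 5) ∨
            x ∈ Arc (5 * π / 6) (hexa E A 5) (tria E A 0)) := by
        constructor
        · rintro ⟨i, h⟩
          fin_cases i
          · exact Or.inl (Or.inl h)
          · exact Or.inl (Or.inr h)
          · exact Or.inr (Or.inl (Or.inl h))
          · exact Or.inr (Or.inl (Or.inr h))
          · exact Or.inr (Or.inr (Or.inl h))
          · exact Or.inr (Or.inr (Or.inr h))
        · rintro ((h | h) | (h | h) | (h | h))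
          · exact ⟨0, h⟩
          · exact ⟨1, h⟩
          · exact ⟨2, h⟩
          · exact ⟨3, h⟩
          · exact ⟨4, h⟩
          · exact ⟨5, h⟩
      rw [L, R, t0, t1, t2]
    · intro i j k hj hk
      refine (hexa_angle hE0 hEA hA2 i (subset_convexHull ℝ _ ⟨j, rfl⟩)
        (subset_convexHull ℝ _ ⟨k, rfl⟩) (ih.ne hj) (ih.ne hk)).trans_lt (by linarith)
    · intro i j k hj hk
      by_cases hjk : j = k
      · subst hjk
        rw [EuclideanGeometry.angle_self_of_ne (it.ne hj)]
        positivity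
      · fin_cases i <;> fin_cases j <;> fin_cases k <;> simp at hj hk hjk <;>
          first
          | exact ang1.trans_lt (by linarith)
          | exact ang2.trans_lt (by linarith)
          | exact ang3.trans_lt (by linarith)
          | exact ang1'.trans_lt (by linarith)
          | exact ang2'.trans_lt (by linarith)
          | exact ang3'.trans_lt (by linarith)

/-- Non-uniqueness when `ω` is unknown and `ω ≥ π/2` is allowed: there is a curve (a circular
arc sequence, given as the common point set) which is simultaneously the maximal `2π/3`-cloud
of a triangle `ace` (with angles `π/3`, `16π/45`, `14π/45`) and the maximal `5π/6`-cloud of a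
hexagon `abcdef` all of whose interior angles are less than `5π/6`. -/
theorem stmt_17 :
    ∃ (V V' : Finset Plane) (ω ω' : ℝ) (a b c d e f : Plane),
      IsConvexPolygon V ∧ IsConvexPolygon V' ∧
      V.card = 3 ∧ V'.card = 6 ∧
      ω = 2 * π / 3 ∧ ω' = 5 * π / 6 ∧ ω ≠ ω' ∧
      (V : Set Plane) = {a, c, e} ∧ (V' : Set Plane) = {a, b, c, d, e, f} ∧
      ∠ a c e = π / 3 ∧ ∠ c e a = 16 * π / 45 ∧ ∠ e a c = 14 * π / 45 ∧
      (∀ v ∈ V', interiorAngle (convexHull ℝ (V' : Set Plane)) v < ω') ∧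
      convexHull ℝ (V : Set Plane) ≠ convexHull ℝ (V' : Set Plane) ∧
      omegaCloud (convexHull ℝ (V : Set Plane)) ω =
        omegaCloud (convexHull ℝ (V' : Set Plane)) ω' := by
  exact main_thm

end
end
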